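/- arXiv:1210.4489 — 2 statements merged into one kernel-verified Lean document; each statement's English description precedes it below -/
import Mathlib

section
/- For every prime p > 3, the rational number Σ_{i=1}^{(p−1)/2} C(2i,i)³ · Σ_{j=1}^{i} 1/(i+j) has p-adic valuation at least 1 (i.e., it is congruent to 0 modulo p). -/
open Finset

def legCoeff (n k : ℕ) : ℕ := (n + k).choose (2 * k) * k.centralBinom

def triCoeff (n k : ℕ) : ℕ := n.choose k * k.centralBinom

lemma choose_succ_left_cast (n k : ℕ) :
    ((n : ℤ) + 1 - k) * ((n + 1).choose k : ℤ) = (n + 1) * (n.choose k : ℤ) := by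
  rcases le_or_gt k (n + 1) with h | h
  · have := Nat.choose_mul_succ_eq n k
    zify [h] at this
    linarith
  · rw [Nat.choose_eq_zero_of_lt h, Nat.choose_eq_zero_of_lt (by omega)]
    simp

lemma choose_succ_right_cast (n k : ℕ) :
    ((k : ℤ) + 1) * (n.choose (k + 1) : ℤ) = (n - k) * (n.choose k : ℤ) := by
  rcases le_or_gt k n with h | h
  · have := Nat.choose_succ_right_eq n k
    zify [h] at this
    linarith
  · rw [Nat.choose_eq_zero_of_lt h, Nat.choose_eq_zero_of_lt (by omega)]
    simp

lemma centralBinom_succ_cast (k : ℕ) :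
    ((k : ℤ) + 1) * ((k + 1).centralBinom : ℤ) = 2 * (2 * k + 1) * (k.centralBinom : ℤ) := by
  exact_mod_cast Nat.succ_mul_centralBinom_succ k

lemma legCoeff_succ_left (n k : ℕ) :
    ((n : ℤ) + 1 - k) * (legCoeff (n + 1) k : ℤ) = (n + 1 + k) * (legCoeff n k : ℤ) := by
  have h := choose_succ_left_cast (n + k) (2 * k)
  rw [show n + k + 1 = n + 1 + k by ring] at h
  simp only [legCoeff]
  push_cast at h ⊢
  linear_combination (k.centralBinom : ℤ) * h

lemma legCoeff_succ_right (n k : ℕ) :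
    ((k : ℤ) + 1) ^ 2 * (legCoeff n (k + 1) : ℤ) = (n - k) * (n + k + 1) * (legCoeff n k : ℤ) := by
  have h1 := choose_succ_left_cast (n + k) (2 * k + 1 + 1)
  have h2 := choose_succ_right_cast (n + k) (2 * k)
  have h3 := choose_succ_right_cast (n + k) (2 * k + 1)
  have h4 := Nat.add_one_mul_choose_eq (n + k) (2 * k + 1)
  have hc := centralBinom_succ_cast k
  rw [show n + k + 1 = n + (k + 1) by ring] at h4
  zify at h4
  simp only [legCoeff, show 2 * (k + 1) = 2 * k + 1 + 1 by ring]
  push_cast at *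
  have h5 : ((2 : ℤ) * k + 1) * ((k + 1) * ((n + (k + 1)).choose (2 * k + 1 + 1) : ℤ)) * 2
      = (n + k + 1) * (n - k) * ((n + k).choose (2 * k) : ℤ) := by
    linear_combination (-(2 * k + 1) : ℤ) * h4 + (n + k + 1 : ℤ) * h2
  linear_combination ((n + (k + 1)).choose (2 * k + 1 + 1) : ℤ) * (k + 1) * hc
    + (k.centralBinom : ℤ) * h5

lemma legCoeff_succ_succ (n k : ℕ) :
    ((k : ℤ) + 1) ^ 2 * (legCoeff (n + 1) (k + 1) : ℤ)
      = (n + k + 2) * (n + k + 1) * (legCoeff n k : ℤ) := by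
  have h1 := legCoeff_succ_right (n + 1) k
  have h2 := legCoeff_succ_left n k
  push_cast at h1
  linear_combination h1 + (n + k + 2 : ℤ) * h2

lemma triCoeff_succ_left (n k : ℕ) :
    ((n : ℤ) + 1 - k) * (triCoeff (n + 1) k : ℤ) = (n + 1) * (triCoeff n k : ℤ) := by
  have h := choose_succ_left_cast n k
  simp only [triCoeff]
  push_cast
  linear_combination (k.centralBinom : ℤ) * h

lemma triCoeff_succ_right (n k : ℕ) :
    ((k : ℤ) + 1) ^ 2 * (triCoeff n (k + 1) : ℤ)
      = (n - k) * (2 * (2 * k + 1)) * (triCoeff n k : ℤ) := by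
  have h := choose_succ_right_cast n k
  have hc := centralBinom_succ_cast k
  simp only [triCoeff]
  push_cast
  linear_combination (k + 1 : ℤ) * ((k + 1).centralBinom : ℤ) * h
    + (n - k : ℤ) * (n.choose k : ℤ) * hc

lemma triCoeff_succ_succ (n k : ℕ) :
    ((k : ℤ) + 1) ^ 2 * (triCoeff (n + 1) (k + 1) : ℤ)
      = (n + 1) * (2 * (2 * k + 1)) * (triCoeff n k : ℤ) := by
  have h1 := triCoeff_succ_right (n + 1) k
  have h2 := triCoeff_succ_left n k
  push_cast at h1
  linear_combination h1 + (2 * (2 * k + 1) : ℤ) * h2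

lemma legCoeff_recurrence (n k : ℕ) :
    ((n : ℤ) + 2) * legCoeff (n + 2) (k + 1)
      = (2 * n + 3) * (legCoeff (n + 1) (k + 1) + 2 * legCoeff (n + 1) k)
        - (n + 1) * legCoeff n (k + 1) := by
  have h0 : ((k : ℤ) + 1) ^ 2 ≠ 0 := by positivity
  apply mul_left_cancel₀ h0
  have h1 := legCoeff_succ_succ (n + 1) k
  have h2 := legCoeff_succ_succ n k
  have h3 := legCoeff_succ_right n k
  have h4 := legCoeff_succ_left n k
  push_cast at *
  linear_combination (n + 2 : ℤ) * h1 - (2 * n + 3 : ℤ) * h2 + (n + 1 : ℤ) * h3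
    + ((2 * n + 3 : ℤ) * (n + k + 2) - (n + 1) * (n - k)) * h4

lemma triCoeff_recurrence (n k : ℕ) :
    ((n : ℤ) + 2) * triCoeff (n + 2) (k + 1)
      = (2 * n + 3) * (triCoeff (n + 1) (k + 1) + 2 * triCoeff (n + 1) k)
        - (n + 1) * (triCoeff n (k + 1) + 4 * triCoeff n k) := by
  have h0 : ((k : ℤ) + 1) ^ 2 ≠ 0 := by positivity
  apply mul_left_cancel₀ h0
  have h1 := triCoeff_succ_succ (n + 1) k
  have h2 := triCoeff_succ_succ n k
  have h3 := triCoeff_succ_right n k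
  have h4 := triCoeff_succ_left n k
  push_cast at *
  linear_combination (n + 2 : ℤ) * h1 - (2 * n + 3 : ℤ) * h2 + (n + 1 : ℤ) * h3
    + ((2 * n + 3 : ℤ) * (2 * (2 * k + 1)) - (n - k) * (2 * (2 * k + 1)) - 4 * (k + 1) ^ 2) * h4

def legSqCoeff (n k : ℕ) : ℕ := legCoeff n k * k.centralBinom

lemma legSqCoeff_recurrence (n k : ℕ) :
    ((n : ℤ) + 2) ^ 2 * legSqCoeff (n + 2) (k + 1)
      = (2 * n + 3) ^ 2 * (legSqCoeff (n + 1) (k + 1) + 4 * legSqCoeff (n + 1) k)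
        - 2 * (2 * n + 3) * ((n + k + 2) * legSqCoeff n (k + 1)
          + 4 * ((n + k + 1) * legSqCoeff n k))
        + (n + 1) ^ 2 * legSqCoeff n (k + 1) := by
  have h0 : ((k : ℤ) + 1) ^ 3 ≠ 0 := by positivity
  apply mul_left_cancel₀ h0
  have h1 := legCoeff_succ_succ (n + 1) k
  have h2 := legCoeff_succ_succ n k
  have h3 := legCoeff_succ_right n k
  have h4 := legCoeff_succ_left n k
  have hc := centralBinom_succ_cast k
  have e : ∀ m : ℕ, ((k : ℤ) + 1) ^ 3 * legSqCoeff m (k + 1)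
      = 2 * (2 * k + 1) * k.centralBinom * ((k + 1) ^ 2 * legCoeff m (k + 1)) := by
    intro m
    simp only [legSqCoeff]
    push_cast
    linear_combination ((k : ℤ) + 1) ^ 2 * legCoeff m (k + 1) * hc
  have e1 := e (n + 2)
  have e2 := e (n + 1)
  have e3 := e n
  rw [h1] at e1
  rw [h2] at e2
  rw [h3] at e3
  have f : ∀ m : ℕ, (legSqCoeff m k : ℤ) = legCoeff m k * k.centralBinom := by
    intro m
    simp [legSqCoeff]
  rw [f, f]
  push_cast at *
  set c : ℤ := (k.centralBinom : ℤ)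
  linear_combination (n + 2 : ℤ) ^ 2 * e1 - (2 * n + 3 : ℤ) ^ 2 * e2
    + (2 * (2 * n + 3 : ℤ) * (n + k + 2) - (n + 1) ^ 2) * e3
    + c * ((2 * n + 3 : ℤ) ^ 2 * (n + k + 2) * (2 * (2 * k + 1))
      - 2 * (2 * n + 3) * (4 * (k + 1) ^ 3) - (2 * (2 * n + 3 : ℤ) * (n + k + 2) - (n + 1) ^ 2) * (n - k) * (2 * (2 * k + 1))) * h4

def homSum {R : Type*} [CommRing R] (c : ℕ → ℕ → ℕ) (x y : R) (n : ℕ) : R :=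
  ∑ k ∈ range (n + 1), (c n k : R) * x ^ (n - k) * y ^ k

section HomSum

variable {R : Type*} [CommRing R] {c : ℕ → ℕ → ℕ}

lemma pow_mul_homSum (hc : ∀ n k, n < k → c n k = 0) (x y : R) (n i N : ℕ) (hN : n < N) :
    x ^ i * homSum c x y n = ∑ k ∈ range N, (c n k : R) * (x ^ (n + i - k) * y ^ k) := by
  have hsub : range (n + 1) ⊆ range N := by
    intro a
    simp only [mem_range]
    omega
  rw [homSum, mul_sum, ← sum_subset hsub]
  · apply sum_congr rfl
    intro k hk
    have : n + i - k = i + (n - k) := by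
      have := mem_range.1 hk
      omega
    rw [this, pow_add]
    ring
  · intro k _ hk
    rw [hc n k (by simpa [Nat.lt_succ_iff] using hk)]
    simp

lemma pow_mul_homSum_succ (hc : ∀ n k, n < k → c n k = 0) (x y : R) (n i N : ℕ) (hN : n ≤ N) :
    x ^ i * homSum c x y n = c n 0 * x ^ (n + i)
      + ∑ k ∈ range N, (c n (k + 1) : R) * (x ^ (n + i - (k + 1)) * y ^ (k + 1)) := by
  rw [pow_mul_homSum hc x y n i (N + 1) (by omega), sum_range_succ']
  simp [add_comm]

lemma pow_mul_mul_homSum (hc : ∀ n k, n < k → c n k = 0) (x y : R) (n i N : ℕ) (hN : n < N) :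
    x ^ i * y * homSum c x y n
      = ∑ k ∈ range N, (c n k : R) * (x ^ (n + i - k) * y ^ (k + 1)) := by
  rw [mul_right_comm, pow_mul_homSum hc x y n i N hN, sum_mul]
  apply sum_congr rfl
  intro k _
  ring

end HomSum

lemma legCoeff_eq_zero (n k : ℕ) (h : n < k) : legCoeff n k = 0 := by
  rw [legCoeff, Nat.choose_eq_zero_of_lt (by omega), zero_mul]

lemma triCoeff_eq_zero (n k : ℕ) (h : n < k) : triCoeff n k = 0 := by
  rw [triCoeff, Nat.choose_eq_zero_of_lt h, zero_mul]

lemma legSqCoeff_eq_zero (n k : ℕ) (h : n < k) : legSqCoeff n k = 0 := by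
  rw [legSqCoeff, legCoeff_eq_zero n k h, zero_mul]

/-- The recurrence satisfied by `d ^ (n / 2)` times the Legendre polynomial at `b / √d`. -/
structure IsLegendreSeq {R : Type*} [CommRing R] (b d : R) (s : ℕ → R) : Prop where
  zero : s 0 = 1
  one : s 1 = b
  step : ∀ n : ℕ, ((n : R) + 2) * s (n + 2) = (2 * n + 3) * (b * s (n + 1)) - (n + 1) * (d * s n)

lemma IsLegendreSeq.unique {R : Type*} [CommRing R] [IsDomain R] [CharZero R] {b d : R}
    {s t : ℕ → R} (hs : IsLegendreSeq b d s) (ht : IsLegendreSeq b d t) (n : ℕ) : s n = t n := by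
  suffices h : s n = t n ∧ s (n + 1) = t (n + 1) from h.1
  induction n with
  | zero => exact ⟨hs.zero.trans ht.zero.symm, hs.one.trans ht.one.symm⟩
  | succ n ih =>
    refine ⟨ih.2, ?_⟩
    have h0 : (n : R) + 2 ≠ 0 := by exact_mod_cast (by omega : n + 2 ≠ 0)
    apply mul_left_cancel₀ h0
    rw [hs.step, ht.step, ih.1, ih.2]

lemma isLegendreSeq_legCoeff {R : Type*} [CommRing R] (x y : R) :
    IsLegendreSeq (x + 2 * y) (x ^ 2) (homSum legCoeff x y) where
  zero := by simp [homSum, legCoeff]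
  one := by simp [homSum, legCoeff, sum_range_succ, Nat.centralBinom]
  step n := by
    have h2 := pow_mul_homSum_succ legCoeff_eq_zero x y (n + 2) 0 (n + 2) le_rfl
    have h1 := pow_mul_homSum_succ legCoeff_eq_zero x y (n + 1) 1 (n + 2) (by omega)
    have h1' := pow_mul_mul_homSum legCoeff_eq_zero x y (n + 1) 0 (n + 2) (by omega)
    have h0 := pow_mul_homSum_succ legCoeff_eq_zero x y n 2 (n + 2) (by omega)
    simp only [pow_zero, one_mul, pow_one, add_zero, add_assoc, Nat.reduceAdd] at *
    have e : ∀ k, n + 1 - k = n + 2 - (k + 1) := by omega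
    simp only [e] at h1'
    have key : ((n : R) + 2) * ∑ k ∈ range (n + 2),
          (legCoeff (n + 2) (k + 1) : R) * (x ^ (n + 2 - (k + 1)) * y ^ (k + 1))
        = (2 * n + 3) * (∑ k ∈ range (n + 2),
          (legCoeff (n + 1) (k + 1) : R) * (x ^ (n + 2 - (k + 1)) * y ^ (k + 1))
          + 2 * ∑ k ∈ range (n + 2),
          (legCoeff (n + 1) k : R) * (x ^ (n + 2 - (k + 1)) * y ^ (k + 1)))
          - (n + 1) * ∑ k ∈ range (n + 2),
          (legCoeff n (k + 1) : R) * (x ^ (n + 2 - (k + 1)) * y ^ (k + 1)) := by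
      simp only [mul_sum, ← sum_add_distrib, ← sum_sub_distrib]
      apply sum_congr rfl
      intro k _
      have := congrArg (Int.cast : ℤ → R) (legCoeff_recurrence n k)
      push_cast at this
      linear_combination (x ^ (n + 2 - (k + 1)) * y ^ (k + 1)) * this
    have c0 : ∀ m, legCoeff m 0 = 1 := by simp [legCoeff]
    simp only [c0, Nat.cast_one] at *
    linear_combination (n + 2 : R) * h2 - (2 * n + 3 : R) * (h1 + 2 * h1') + (n + 1 : R) * h0 + key

lemma isLegendreSeq_triCoeff {R : Type*} [CommRing R] (x y : R) :
    IsLegendreSeq (x + 2 * y) (x * (x + 4 * y)) (homSum triCoeff x y) where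
  zero := by simp [homSum, triCoeff]
  one := by simp [homSum, triCoeff, sum_range_succ, Nat.centralBinom]
  step n := by
    have h2 := pow_mul_homSum_succ triCoeff_eq_zero x y (n + 2) 0 (n + 2) le_rfl
    have h1 := pow_mul_homSum_succ triCoeff_eq_zero x y (n + 1) 1 (n + 2) (by omega)
    have h1' := pow_mul_mul_homSum triCoeff_eq_zero x y (n + 1) 0 (n + 2) (by omega)
    have h0 := pow_mul_homSum_succ triCoeff_eq_zero x y n 2 (n + 2) (by omega)
    have h0' := pow_mul_mul_homSum triCoeff_eq_zero x y n 1 (n + 2) (by omega)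
    simp only [pow_zero, one_mul, pow_one, add_zero, add_assoc, Nat.reduceAdd] at *
    have e : ∀ k, n + 1 - k = n + 2 - (k + 1) := by omega
    simp only [e] at h1' h0'
    have key : ((n : R) + 2) * ∑ k ∈ range (n + 2),
          (triCoeff (n + 2) (k + 1) : R) * (x ^ (n + 2 - (k + 1)) * y ^ (k + 1))
        = (2 * n + 3) * (∑ k ∈ range (n + 2),
          (triCoeff (n + 1) (k + 1) : R) * (x ^ (n + 2 - (k + 1)) * y ^ (k + 1))
          + 2 * ∑ k ∈ range (n + 2),
          (triCoeff (n + 1) k : R) * (x ^ (n + 2 - (k + 1)) * y ^ (k + 1)))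
          - (n + 1) * (∑ k ∈ range (n + 2),
          (triCoeff n (k + 1) : R) * (x ^ (n + 2 - (k + 1)) * y ^ (k + 1))
          + 4 * ∑ k ∈ range (n + 2),
          (triCoeff n k : R) * (x ^ (n + 2 - (k + 1)) * y ^ (k + 1))) := by
      simp only [mul_sum, ← sum_add_distrib, ← sum_sub_distrib]
      apply sum_congr rfl
      intro k _
      have := congrArg (Int.cast : ℤ → R) (triCoeff_recurrence n k)
      push_cast at this
      linear_combination (x ^ (n + 2 - (k + 1)) * y ^ (k + 1)) * this
    have c0 : ∀ m, triCoeff m 0 = 1 := by simp [triCoeff]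
    simp only [c0, Nat.cast_one] at *
    linear_combination (n + 2 : R) * h2 - (2 * n + 3 : R) * (h1 + 2 * h1')
      + (n + 1 : R) * (h0 + 4 * h0') + key

lemma IsLegendreSeq.sq {R : Type*} [CommRing R] [IsDomain R] [CharZero R] {b d e : R}
    {s : ℕ → R} (hs : IsLegendreSeq b d s) (hb : b ^ 2 = d + 4 * e) (n : ℕ) :
    s n ^ 2 = homSum legSqCoeff d e n := by
  set w : ℕ → ℕ → ℕ := fun n k ↦ (n + k + 1) * legSqCoeff n k with hw
  have hw0 : ∀ n k, n < k → w n k = 0 := by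
    intro n k h
    simp [hw, legSqCoeff_eq_zero n k h]
  have hvw : ∀ n : ℕ, (2 * (n : R) + 3) * homSum legSqCoeff d e (n + 1)
      = homSum w d e (n + 1) + d * homSum w d e n := by
    intro n
    have h1 := pow_mul_homSum legSqCoeff_eq_zero d e (n + 1) 0 (n + 2) (by omega)
    have h2 := pow_mul_homSum hw0 d e (n + 1) 0 (n + 2) (by omega)
    have h3 := pow_mul_homSum hw0 d e n 1 (n + 2) (by omega)
    simp only [pow_zero, one_mul, pow_one, add_zero] at *
    rw [h1, h2, h3]
    simp only [mul_sum, ← sum_add_distrib]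
    apply sum_congr rfl
    intro k _
    have := congrArg (Int.cast : ℤ → R) (legCoeff_succ_left n k)
    simp only [hw, legSqCoeff]
    push_cast at this ⊢
    linear_combination (k.centralBinom * d ^ (n + 1 - k) * e ^ k : R) * this
  have hv : ∀ n : ℕ, ((n : R) + 2) ^ 2 * homSum legSqCoeff d e (n + 2)
      = (2 * n + 3) ^ 2 * (d + 4 * e) * homSum legSqCoeff d e (n + 1)
        - 2 * (2 * n + 3) * (d + 4 * e) * d * homSum w d e n
        + (n + 1) ^ 2 * d ^ 2 * homSum legSqCoeff d e n := by
    intro n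
    have h2 := pow_mul_homSum_succ legSqCoeff_eq_zero d e (n + 2) 0 (n + 2) le_rfl
    have h1 := pow_mul_homSum_succ legSqCoeff_eq_zero d e (n + 1) 1 (n + 2) (by omega)
    have h1' := pow_mul_mul_homSum legSqCoeff_eq_zero d e (n + 1) 0 (n + 2) (by omega)
    have h0 := pow_mul_homSum_succ legSqCoeff_eq_zero d e n 2 (n + 2) (by omega)
    have g0 := pow_mul_homSum_succ hw0 d e n 2 (n + 2) (by omega)
    have g0' := pow_mul_mul_homSum hw0 d e n 1 (n + 2) (by omega)
    simp only [pow_zero, one_mul, pow_one, add_zero, add_assoc, Nat.reduceAdd] at *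
    have ee : ∀ k, n + 1 - k = n + 2 - (k + 1) := by omega
    simp only [ee] at h1' g0'
    have key : ((n : R) + 2) ^ 2 * ∑ k ∈ range (n + 2),
          (legSqCoeff (n + 2) (k + 1) : R) * (d ^ (n + 2 - (k + 1)) * e ^ (k + 1))
        = (2 * n + 3) ^ 2 * (∑ k ∈ range (n + 2),
          (legSqCoeff (n + 1) (k + 1) : R) * (d ^ (n + 2 - (k + 1)) * e ^ (k + 1))
          + 4 * ∑ k ∈ range (n + 2),
          (legSqCoeff (n + 1) k : R) * (d ^ (n + 2 - (k + 1)) * e ^ (k + 1)))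
          - 2 * (2 * n + 3) * (∑ k ∈ range (n + 2),
          (w n (k + 1) : R) * (d ^ (n + 2 - (k + 1)) * e ^ (k + 1))
          + 4 * ∑ k ∈ range (n + 2),
          (w n k : R) * (d ^ (n + 2 - (k + 1)) * e ^ (k + 1)))
          + (n + 1) ^ 2 * ∑ k ∈ range (n + 2),
          (legSqCoeff n (k + 1) : R) * (d ^ (n + 2 - (k + 1)) * e ^ (k + 1)) := by
      simp only [mul_sum, ← sum_add_distrib, ← sum_sub_distrib]
      apply sum_congr rfl
      intro k _
      have := congrArg (Int.cast : ℤ → R) (legSqCoeff_recurrence n k)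
      simp only [hw]
      generalize d ^ (n + 2 - (k + 1)) * e ^ (k + 1) = E
      push_cast at this ⊢
      linear_combination E * this
    have c0 : ∀ m, legSqCoeff m 0 = 1 := by simp [legSqCoeff, legCoeff]
    have c1 : ∀ m, w m 0 = m + 1 := by simp [hw, c0]
    simp only [c0, c1, Nat.cast_one, Nat.cast_add] at *
    linear_combination (n + 2 : R) ^ 2 * h2 - (2 * n + 3 : R) ^ 2 * (h1 + 4 * h1')
      + 2 * (2 * n + 3 : R) * (g0 + 4 * g0') - (n + 1 : R) ^ 2 * h0 + key
  suffices h : s n ^ 2 = homSum legSqCoeff d e n ∧ s (n + 1) ^ 2 = homSum legSqCoeff d e (n + 1)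
      ∧ ((n : R) + 1) * (s n * s (n + 1)) = b * homSum w d e n from h.1
  induction n with
  | zero =>
    rw [zero_add, hs.zero, hs.one, hb]
    simp [homSum, hw, legSqCoeff, legCoeff, sum_range_succ, Nat.centralBinom]
    norm_num
  | succ n ih =>
    obtain ⟨ih1, ih2, ih3⟩ := ih
    refine ⟨ih2, ?_, ?_⟩
    · have h0 : ((n : R) + 2) ^ 2 ≠ 0 := pow_ne_zero _ (by exact_mod_cast (by omega : n + 2 ≠ 0))
      apply mul_left_cancel₀ h0
      rw [hv, ← mul_pow, hs.step, ← ih1, ← ih2, ← hb]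
      linear_combination (-2 * (2 * n + 3) * b * d : R) * ih3
    · push_cast
      linear_combination s (n + 1) * hs.step n + (2 * n + 3 : R) * b * ih2 + b * hvw n - d * ih3

def binomConv {R : Type*} [CommRing R] (c : R) (n : ℕ) : R :=
  ∑ k ∈ range (n + 1), (k.centralBinom * (n - k).centralBinom : R) * c ^ k

lemma isLegendreSeq_binomConv {R : Type*} [CommRing R] (c : R) :
    IsLegendreSeq (2 * (1 + c)) (16 * c) (binomConv c) where
  zero := by simp [binomConv]
  one := by simp [binomConv, sum_range_succ, Nat.centralBinom]; ring
  step n := by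
    let F : ℕ → R := fun k ↦ (k.centralBinom : R)
    let f : PowerSeries R := PowerSeries.mk F
    let g : PowerSeries R := PowerSeries.mk fun k ↦ F k * c ^ k
    have hF : ∀ k : ℕ, F (k + 1) * (k + 1) = 4 * (F k * k) + 2 * F k := by
      intro k
      have := congrArg (Int.cast : ℤ → R) (centralBinom_succ_cast k)
      simp only [F]
      push_cast at this
      linear_combination this
    have hX : ∀ (h : PowerSeries R) (k : ℕ),
        PowerSeries.coeff k (PowerSeries.X * PowerSeries.derivative R h)
          = PowerSeries.coeff k h * k := by
      rintro h (_ | k)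
      · simp
      · rw [PowerSeries.coeff_succ_X_mul, PowerSeries.coeff_derivative]
        simp
    have hf : PowerSeries.derivative R f
        = PowerSeries.C 4 * (PowerSeries.X * PowerSeries.derivative R f)
          + PowerSeries.C 2 * f := by
      ext k
      rw [map_add, PowerSeries.coeff_C_mul, PowerSeries.coeff_C_mul, hX,
        PowerSeries.coeff_derivative]
      simpa [f] using hF k
    have hg : PowerSeries.derivative R g
        = PowerSeries.C (4 * c) * (PowerSeries.X * PowerSeries.derivative R g)
          + PowerSeries.C (2 * c) * g := by
      ext k
      rw [map_add, PowerSeries.coeff_C_mul, PowerSeries.coeff_C_mul, hX,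
        PowerSeries.coeff_derivative]
      simp only [g, PowerSeries.coeff_mk]
      linear_combination c ^ (k + 1) * hF k
    have hfg : ∀ m, binomConv c m = PowerSeries.coeff m (f * g) := by
      intro m
      rw [PowerSeries.coeff_mul, binomConv, ← Finset.Nat.sum_antidiagonal_swap,
        Finset.Nat.sum_antidiagonal_eq_sum_range_succ_mk]
      apply sum_congr rfl
      intro k _
      simp [f, g, F]
      ring
    have hG : PowerSeries.derivative R (f * g)
        = PowerSeries.C (4 * (1 + c)) * (PowerSeries.X * PowerSeries.derivative R (f * g))
          - PowerSeries.C (16 * c)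
            * (PowerSeries.X * (PowerSeries.X * PowerSeries.derivative R (f * g)))
          + PowerSeries.C (2 * (1 + c)) * (f * g)
          - PowerSeries.C (16 * c) * (PowerSeries.X * (f * g)) := by
      rw [Derivation.leibniz, smul_eq_mul, smul_eq_mul]
      simp only [map_add, map_mul, map_ofNat, map_one] at *
      linear_combination g * (1 - 4 * PowerSeries.C c * PowerSeries.X) * hf
        + f * (1 - 4 * PowerSeries.X) * hg
    have := congrArg (PowerSeries.coeff (n + 1)) hG
    simp only [map_add, map_sub, PowerSeries.coeff_C_mul, PowerSeries.coeff_succ_X_mul, hX,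
      PowerSeries.coeff_derivative, ← hfg] at this
    push_cast at this
    linear_combination this

section Map

variable {R S : Type*} [CommRing R] [CommRing S] {F : Type*} [FunLike F R S]
  [RingHomClass F R S] (φ : F)

lemma map_homSum (c : ℕ → ℕ → ℕ) (x y : R) (n : ℕ) :
    φ (homSum c x y n) = homSum c (φ x) (φ y) n := by
  simp [homSum]

lemma map_binomConv (c : R) (n : ℕ) : φ (binomConv c n) = binomConv (φ c) n := by
  simp [binomConv]

end Map

lemma homSum_mul_mul {R : Type*} [CommRing R] (c : ℕ → ℕ → ℕ) (t x y : R) (n : ℕ) :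
    homSum c (t * x) (t * y) n = t ^ n * homSum c x y n := by
  rw [homSum, homSum, mul_sum]
  apply sum_congr rfl
  intro k hk
  obtain ⟨m, rfl⟩ := Nat.exists_eq_add_of_le (Nat.lt_succ_iff.1 (mem_range.1 hk))
  rw [Nat.add_sub_cancel_left, mul_pow, mul_pow, pow_add]
  ring

lemma IsLegendreSeq.congr {R : Type*} [CommRing R] {b d b' d' : R} {s : ℕ → R}
    (hs : IsLegendreSeq b d s) (hb : b = b') (hd : d = d') : IsLegendreSeq b' d' s :=
  hb ▸ hd ▸ hs

lemma IsLegendreSeq.neg {R : Type*} [CommRing R] {b d : R} {s : ℕ → R}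
    (hs : IsLegendreSeq b d s) : IsLegendreSeq (-b) d (fun n ↦ (-1) ^ n * s n) where
  zero := by simp [hs.zero]
  one := by simp [hs.one]
  step n := by
    have := hs.step n
    simp only [pow_succ]
    linear_combination (-1) ^ n * this

section Identities

variable {R : Type*} [CommRing R]

open Polynomial

/-- Landen's transformation for Legendre polynomials. -/
lemma homSum_legCoeff_landen (z : R) (n : ℕ) :
    homSum legCoeff (-4 * z) ((1 + z) ^ 2) n = binomConv (z ^ 2) n := by
  have h : homSum legCoeff (-4 * X : ℤ[X]) ((1 + X) ^ 2) n = binomConv (X ^ 2) n :=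
    ((isLegendreSeq_legCoeff _ _).congr (by ring) (by ring)).unique (isLegendreSeq_binomConv _) n
  simpa [map_homSum, map_binomConv, map_ofNat (aeval (R := ℤ) z)] using congrArg (aeval (R := ℤ) z) h

lemma homSum_triCoeff_four_neg (z : R) (n : ℕ) :
    homSum triCoeff 4 (-z) n = binomConv (1 - z) n := by
  have h : homSum triCoeff (4 : ℤ[X]) (-X) n = binomConv (1 - X) n :=
    ((isLegendreSeq_triCoeff _ _).congr (by ring) (by ring)).unique (isLegendreSeq_binomConv _) n
  simpa [map_homSum, map_binomConv, map_ofNat (aeval (R := ℤ) z)] using congrArg (aeval (R := ℤ) z) h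

lemma homSum_legCoeff_one_neg_sq (z : R) (n : ℕ) :
    homSum legCoeff 1 (-z) n ^ 2 = homSum legSqCoeff 1 (z ^ 2 - z) n := by
  have h : homSum legCoeff (1 : ℤ[X]) (-X) n ^ 2 = homSum legSqCoeff 1 (X ^ 2 - X) n :=
    ((isLegendreSeq_legCoeff _ _).congr rfl (one_pow 2)).sq (by ring) n
  simpa [map_homSum, map_ofNat (aeval (R := ℤ) z)] using congrArg (aeval (R := ℤ) z) h

lemma homSum_triCoeff_sq (z : R) (n : ℕ) :
    homSum triCoeff (-4 * z) 1 n ^ 2 = homSum legSqCoeff (16 * (z ^ 2 - z)) 1 n := by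
  have h : homSum triCoeff (-4 * X : ℤ[X]) 1 n ^ 2 = homSum legSqCoeff (16 * (X ^ 2 - X)) 1 n :=
    ((isLegendreSeq_triCoeff _ _).congr rfl (by ring)).sq (by ring) n
  simpa [map_homSum, map_ofNat (aeval (R := ℤ) z)] using congrArg (aeval (R := ℤ) z) h

lemma homSum_legCoeff_one_sub (z : R) (n : ℕ) :
    homSum legCoeff 1 (-(1 - z)) n = (-1) ^ n * homSum legCoeff 1 (-z) n := by
  have h : homSum legCoeff (1 : ℤ[X]) (-(1 - X)) n = (-1) ^ n * homSum legCoeff 1 (-X) n :=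
    (isLegendreSeq_legCoeff _ _).unique
      ((isLegendreSeq_legCoeff _ _).neg.congr (by ring) (by ring)) n
  simpa [map_homSum, map_ofNat (aeval (R := ℤ) z)] using congrArg (aeval (R := ℤ) z) h

lemma homSum_legCoeff_neg_one_one (n : ℕ) : homSum legCoeff (-1 : R) 1 n = 1 := by
  have h : homSum legCoeff (-1 : ℤ) 1 n = 1 :=
    (isLegendreSeq_legCoeff _ _).unique (t := fun _ ↦ 1) ⟨rfl, by norm_num, fun n ↦ by ring⟩ n
  have := congrArg (Int.castRingHom R) h
  rw [map_homSum] at this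
  simpa using this

lemma homSum_legCoeff_one_neg_one (n : ℕ) : homSum legCoeff (1 : R) (-1) n = (-1) ^ n := by
  have := homSum_mul_mul legCoeff (-1 : R) (-1) 1 n
  rw [homSum_legCoeff_neg_one_one] at this
  simpa using this

lemma binomConv_one (n : ℕ) : binomConv (1 : R) n = 4 ^ n := by
  have := homSum_legCoeff_landen (1 : R) n
  rw [show (-4 * 1 : R) = 4 * -1 by ring, show ((1 + 1 : R)) ^ 2 = 4 * 1 by ring,
    homSum_mul_mul, homSum_legCoeff_neg_one_one] at this
  simpa using this.symm

end Identities

lemma eq_mul_mul_of_ratio {R : Type*} [CommRing R] {x y E α β γ δ : ℕ → R} {c : R} {n : ℕ}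
    (h0 : x 0 = c * y 0 * E 0) (hx : ∀ k < n, α k * x (k + 1) = β k * x k)
    (hy : ∀ k < n, γ k * y (k + 1) = δ k * y k) (hα : ∀ k < n, IsUnit (α k))
    (hγ : ∀ k < n, IsUnit (γ k)) (hE : ∀ k < n, γ k * β k * E k = α k * δ k * E (k + 1)) :
    ∀ k ≤ n, x k = c * y k * E k := by
  intro k
  induction k with
  | zero => exact fun _ ↦ h0
  | succ k ih =>
    intro hk
    apply (hα k hk).mul_left_cancel
    apply (hγ k hk).mul_left_cancel
    linear_combination γ k * hx k hk + γ k * β k * ih (by omega) + c * y k * hE k hk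
      - α k * c * E (k + 1) * hy k hk

lemma isUnit_natCast_of_coprime {R : Type*} [CommRing R] {p m : ℕ} (hp : (p : R) ^ 2 = 0)
    (hm : m.Coprime p) : IsUnit (m : R) := by
  obtain ⟨a, b, h⟩ := Nat.isCoprime_iff_coprime.2 (hm.pow_right 2)
  have := congrArg (Int.cast : ℤ → R) h
  push_cast at this
  rw [hp, mul_zero, add_zero, mul_comm] at this
  exact IsUnit.of_mul_eq_one _ this

/-- Sum of the given inverses of the first `k` odd numbers. -/
def oddSum {R : Type*} [CommRing R] (i : ℕ → R) (k : ℕ) : R := ∑ j ∈ range k, i (2 * j + 1)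

/-- Sum of the given inverses of the first `k` positive even numbers. -/
def evenSum {R : Type*} [CommRing R] (i : ℕ → R) (k : ℕ) : R := ∑ j ∈ range k, i (2 * j + 2)

lemma oddSum_succ {R : Type*} [CommRing R] (i : ℕ → R) (k : ℕ) :
    oddSum i (k + 1) = oddSum i k + i (2 * k + 1) := sum_range_succ _ _

lemma evenSum_succ {R : Type*} [CommRing R] (i : ℕ → R) (k : ℕ) :
    evenSum i (k + 1) = evenSum i k + i (2 * k + 2) := sum_range_succ _ _

section Coefficients

variable {R : Type*} [CommRing R] {n : ℕ} {i : ℕ → R}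

lemma isUnit_natCast_of_inv (hi : ∀ j, 0 < j → j < 2 * n + 1 → (j : R) * i j = 1) (j : ℕ)
    (h0 : 0 < j) (hj : j < 2 * n + 1) : IsUnit (j : R) :=
  IsUnit.of_mul_eq_one _ (hi j h0 hj)

lemma isUnit_centralBinom (hi : ∀ j, 0 < j → j < 2 * n + 1 → (j : R) * i j = 1) (k : ℕ)
    (hk : k ≤ n) : IsUnit (k.centralBinom : R) := by
  induction k with
  | zero => simp
  | succ k ih =>
    have h := congrArg (Nat.cast : ℕ → R) (Nat.succ_mul_centralBinom_succ k)
    push_cast at h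
    have h2 := isUnit_natCast_of_inv hi 2 (by omega) (by omega)
    have h3 := isUnit_natCast_of_inv hi (2 * k + 1) (by omega) (by omega)
    have := (h2.mul h3).mul (ih (by omega))
    push_cast at this
    rw [← h] at this
    exact isUnit_of_mul_isUnit_right this

lemma isUnit_four_mul_sq (hi : ∀ j, 0 < j → j < 2 * n + 1 → (j : R) * i j = 1) (k : ℕ)
    (hk : k < n) : IsUnit (4 * ((k : R) + 1) ^ 2) := by
  have := (isUnit_natCast_of_inv hi (2 * k + 2) (by omega) (by omega)).pow 2
  convert this using 1
  push_cast
  ring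

lemma legCoeff_succ_of_sq_eq_zero (hp : (2 * (n : R) + 1) ^ 2 = 0) (k : ℕ) :
    4 * ((k : R) + 1) ^ 2 * ((-1) ^ (k + 1) * legCoeff n (k + 1))
      = (2 * k + 1) ^ 2 * ((-1) ^ k * legCoeff n k) := by
  have h := congrArg (Int.cast : ℤ → R) (legCoeff_succ_right n k)
  push_cast at h
  rw [pow_succ]
  linear_combination (-4 * (-1) ^ k : R) * h - (-1) ^ k * legCoeff n k * hp

lemma legCoeff_eq_centralBinom_sq (hp : (2 * (n : R) + 1) ^ 2 = 0)
    (hi : ∀ j, 0 < j → j < 2 * n + 1 → (j : R) * i j = 1) (k : ℕ) (hk : k ≤ n) :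
    (k.centralBinom : R) ^ 2 = 1 * ((-1) ^ k * legCoeff n k) * 16 ^ k := by
  refine eq_mul_mul_of_ratio (x := fun k ↦ (k.centralBinom : R) ^ 2)
    (y := fun k ↦ (-1) ^ k * legCoeff n k) (E := fun k ↦ 16 ^ k)
    (α := fun k ↦ 4 * (k + 1) ^ 2) (β := fun k ↦ 16 * (2 * k + 1) ^ 2)
    (by simp [legCoeff]) ?_ (fun k _ ↦ legCoeff_succ_of_sq_eq_zero hp k)
    (isUnit_four_mul_sq hi) (isUnit_four_mul_sq hi) ?_ k hk
  · intro k _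
    have h := congrArg (Int.cast : ℤ → R) (centralBinom_succ_cast k)
    push_cast at h
    linear_combination
      4 * ((k + 1) * (k + 1).centralBinom + 2 * (2 * k + 1) * k.centralBinom : R) * h
  · intro k _
    simp only [pow_succ]
    ring

lemma centralBinom_sub (k : ℕ) (hk : k < n) :
    2 * ((n : R) - k) * (n - k).centralBinom
      = 4 * (2 * n - 2 * k - 1) * (n - (k + 1)).centralBinom := by
  obtain ⟨m, rfl⟩ := Nat.exists_eq_add_of_le' hk
  have h := congrArg (Int.cast : ℤ → R) (centralBinom_succ_cast m)
  rw [show m + (k + 1) - k = m + 1 by omega, Nat.add_sub_cancel]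
  push_cast at h ⊢
  linear_combination 2 * h

lemma isUnit_sub (hi : ∀ j, 0 < j → j < 2 * n + 1 → (j : R) * i j = 1) (k : ℕ)
    (hk : k < n) : IsUnit (2 * (n : R) - 2 * k - 1) := by
  obtain ⟨m, rfl⟩ := Nat.exists_eq_add_of_le' hk
  convert isUnit_natCast_of_inv hi (2 * m + 1) (by omega) (by omega) using 1
  push_cast
  ring

lemma isUnit_add_one (hi : ∀ j, 0 < j → j < 2 * n + 1 → (j : R) * i j = 1) (k : ℕ)
    (hk : k < n) : IsUnit ((k : R) + 1) := by
  exact_mod_cast isUnit_natCast_of_inv hi (k + 1) (by omega) (by omega)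

lemma inv_odd (hi : ∀ j, 0 < j → j < 2 * n + 1 → (j : R) * i j = 1) (k : ℕ)
    (hk : k < n) : (2 * (k : R) + 1) * i (2 * k + 1) = 1 := by
  exact_mod_cast hi (2 * k + 1) (by omega) (by omega)

lemma inv_even (hi : ∀ j, 0 < j → j < 2 * n + 1 → (j : R) * i j = 1) (k : ℕ)
    (hk : k < n) : (2 * (k : R) + 2) * i (2 * k + 2) = 1 := by
  exact_mod_cast hi (2 * k + 2) (by omega) (by omega)

lemma centralBinom_mul_centralBinom_sub (hp : (2 * (n : R) + 1) ^ 2 = 0)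
    (hi : ∀ j, 0 < j → j < 2 * n + 1 → (j : R) * i j = 1) (k : ℕ) (hk : k ≤ n) :
    (k.centralBinom : R) * (n - k).centralBinom
      = n.centralBinom * ((-1) ^ k * legCoeff n k)
        * (1 + (2 * n + 1) * (evenSum i k - oddSum i k)) := by
  refine eq_mul_mul_of_ratio (x := fun k ↦ (k.centralBinom : R) * (n - k).centralBinom)
    (y := fun k ↦ (-1) ^ k * legCoeff n k)
    (E := fun k ↦ 1 + (2 * n + 1) * (evenSum i k - oddSum i k))
    (α := fun k ↦ 4 * (k + 1) * (2 * n - 2 * k - 1))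
    (β := fun k ↦ 4 * (2 * k + 1) * (n - k))
    (by simp [legCoeff, evenSum, oddSum]) ?_ (fun k _ ↦ legCoeff_succ_of_sq_eq_zero hp k)
    ?_ (isUnit_four_mul_sq hi) ?_ k hk
  · intro k hk
    have h := congrArg (Int.cast : ℤ → R) (centralBinom_succ_cast k)
    have h' := centralBinom_sub (R := R) k hk
    push_cast at h
    linear_combination 4 * (2 * n - 2 * k - 1 : R) * (n - (k + 1)).centralBinom * h
      - 2 * (2 * k + 1 : R) * k.centralBinom * h'
  · intro k hk
    have h4 : IsUnit (4 : R) := by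
      have := (isUnit_natCast_of_inv hi 2 (by omega) (by omega)).pow 2
      norm_num at this
      exact this
    exact (h4.mul (isUnit_add_one hi k hk)).mul (isUnit_sub hi k hk)
  · intro k hk
    have h1 := inv_odd hi k hk
    have h2 := inv_even hi k hk
    rw [evenSum_succ, oddSum_succ]
    linear_combination 2 * (2 * k + 1 : R) * (2 * k + 2)
      * ((evenSum i k - oddSum i k - (2 * k + 1) * (i (2 * k + 2) - i (2 * k + 1))) * hp
        + (2 * n + 1) * ((2 * k + 1) * h2 - (2 * k + 2) * h1))

lemma legCoeff_sub (hp : (2 * (n : R) + 1) ^ 2 = 0)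
    (hi : ∀ j, 0 < j → j < 2 * n + 1 → (j : R) * i j = 1) (k : ℕ) (hk : k ≤ n) :
    (-1) ^ k * (legCoeff n (n - k) : R)
      = n.centralBinom * ((-1) ^ k * legCoeff n k)
        * (1 + 2 * (2 * n + 1) * (evenSum i k - oddSum i k)) := by
  refine eq_mul_mul_of_ratio (x := fun k ↦ (-1) ^ k * (legCoeff n (n - k) : R))
    (y := fun k ↦ (-1) ^ k * legCoeff n k)
    (E := fun k ↦ 1 + 2 * (2 * n + 1) * (evenSum i k - oddSum i k))
    (α := fun k ↦ 4 * ((k + 1) * (2 * n - k)))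
    (β := fun k ↦ -4 * (n - k) ^ 2)
    (by simp [legCoeff, evenSum, oddSum, ← two_mul]) ?_
    (fun k _ ↦ legCoeff_succ_of_sq_eq_zero hp k) ?_ (isUnit_four_mul_sq hi) ?_ k hk
  · intro k hk
    obtain ⟨m, rfl⟩ := Nat.exists_eq_add_of_le' hk
    have h := congrArg (Int.cast : ℤ → R) (legCoeff_succ_right (m + (k + 1)) m)
    rw [show m + (k + 1) - k = m + 1 by omega, Nat.add_sub_cancel, pow_succ]
    push_cast at h ⊢
    linear_combination (4 * (-1) ^ k : R) * h
  · intro k hk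
    have h4 := (isUnit_natCast_of_inv hi 2 (by omega) (by omega)).pow 2
    have h := isUnit_natCast_of_inv hi (2 * n - k) (by omega) (by omega)
    rw [Nat.cast_sub (by omega)] at h
    push_cast at h h4
    rw [show (2 : R) ^ 2 = 4 by norm_num] at h4
    exact h4.mul ((isUnit_add_one hi k hk).mul h)
  · intro k hk
    have h1 := inv_odd hi k hk
    have h2 := inv_even hi k hk
    rw [evenSum_succ, oddSum_succ]
    linear_combination (2 * k + 2 : R)
      * ((-(2 * k + 2) * (1 + 2 * (2 * n + 1) * (evenSum i k - oddSum i k))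
          + 4 * (2 * k + 1) * (evenSum i k - oddSum i k)
          - 4 * (2 * k + 1) ^ 2 * (i (2 * k + 2) - i (2 * k + 1))) * hp
        + 2 * (2 * n + 1) * (2 * k + 1) * ((2 * k + 1) * h2 - (2 * k + 2) * h1))

lemma triCoeff_sub (hp : (2 * (n : R) + 1) ^ 2 = 0)
    (hi : ∀ j, 0 < j → j < 2 * n + 1 → (j : R) * i j = 1) (k : ℕ) (hk : k ≤ n) :
    (-4) ^ k * (triCoeff n (n - k) : R)
      = n.centralBinom * ((-1) ^ k * legCoeff n k)
        * (1 + (2 * n + 1) * (evenSum i k - 2 * oddSum i k)) := by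
  refine eq_mul_mul_of_ratio (x := fun k ↦ (-4) ^ k * (triCoeff n (n - k) : R))
    (y := fun k ↦ (-1) ^ k * legCoeff n k)
    (E := fun k ↦ 1 + (2 * n + 1) * (evenSum i k - 2 * oddSum i k))
    (α := fun k ↦ -(2 * ((k + 1) * (2 * n - 2 * k - 1))))
    (β := fun k ↦ 4 * (n - k) ^ 2)
    (by simp [triCoeff, legCoeff, evenSum, oddSum]) ?_
    (fun k _ ↦ legCoeff_succ_of_sq_eq_zero hp k) ?_ (isUnit_four_mul_sq hi) ?_ k hk
  · intro k hk
    obtain ⟨m, rfl⟩ := Nat.exists_eq_add_of_le' hk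
    have h := congrArg (Int.cast : ℤ → R) (triCoeff_succ_right (m + (k + 1)) m)
    rw [show m + (k + 1) - k = m + 1 by omega, Nat.add_sub_cancel, pow_succ]
    push_cast at h ⊢
    linear_combination (-4 * (-4) ^ k : R) * h
  · intro k hk
    have h2 := isUnit_natCast_of_inv hi 2 (by omega) (by omega)
    exact (h2.mul ((isUnit_add_one hi k hk).mul (isUnit_sub hi k hk))).neg
  · intro k hk
    have h1 := inv_odd hi k hk
    have h2 := inv_even hi k hk
    rw [evenSum_succ, oddSum_succ]
    linear_combination (2 * k + 2 : R)
      * (((2 * k + 2) * (1 + (2 * n + 1) * (evenSum i k - 2 * oddSum i k))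
          - (2 * k + 1) * (2 * k + 3) * (evenSum i k - 2 * oddSum i k)
          + (2 * k + 1) ^ 2 * (i (2 * k + 2) - 2 * i (2 * k + 1))) * hp
        - (2 * n + 1) * (2 * k + 1) * ((2 * k + 1) * h2 - 2 * (2 * k + 2) * h1))

lemma triCoeff_mul_four_pow_sub (hp : (2 * (n : R) + 1) ^ 2 = 0)
    (hi : ∀ j, 0 < j → j < 2 * n + 1 → (j : R) * i j = 1) (k : ℕ) (hk : k ≤ n) :
    triCoeff n k * 4 ^ (n - k) * (-1 : R) ^ k
      = 4 ^ n * ((-1) ^ k * legCoeff n k) * (1 - (2 * n + 1) * oddSum i k) := by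
  refine eq_mul_mul_of_ratio (x := fun k ↦ triCoeff n k * 4 ^ (n - k) * (-1 : R) ^ k)
    (y := fun k ↦ (-1) ^ k * legCoeff n k)
    (E := fun k ↦ 1 - (2 * n + 1) * oddSum i k)
    (α := fun k ↦ 4 * (k + 1) ^ 2) (β := fun k ↦ -2 * (n - k) * (2 * k + 1))
    (by simp [triCoeff, legCoeff, oddSum]) ?_
    (fun k _ ↦ legCoeff_succ_of_sq_eq_zero hp k) (isUnit_four_mul_sq hi)
    (isUnit_four_mul_sq hi) ?_ k hk
  · intro k hk
    obtain ⟨m, rfl⟩ := Nat.exists_eq_add_of_le' hk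
    have h := congrArg (Int.cast : ℤ → R) (triCoeff_succ_right (m + (k + 1)) k)
    rw [show m + (k + 1) - k = m + 1 by omega, Nat.add_sub_cancel, pow_succ, pow_succ]
    push_cast at h ⊢
    linear_combination (-4 * 4 ^ m * (-1) ^ k : R) * h
  · intro k hk
    have h1 := inv_odd hi k hk
    rw [oddSum_succ]
    linear_combination (2 * k + 2 : R) ^ 2 * (2 * k + 1)
      * (oddSum i k * hp + (2 * n + 1) * h1)

end Coefficients

section Relations

variable {R : Type*} [CommRing R] {n : ℕ} {i : ℕ → R}

lemma homSum_reflect (c : ℕ → ℕ → ℕ) (x y : R) (n : ℕ) :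
    homSum c x y n = ∑ k ∈ range (n + 1), (c n (n - k) : R) * x ^ k * y ^ (n - k) := by
  rw [homSum, ← sum_range_reflect]
  apply sum_congr rfl
  intro k hk
  have := mem_range.1 hk
  rw [show n + 1 - 1 - k = n - k by omega, show n - (n - k) = k by omega]

lemma homSum_legCoeff_one_neg (z : R) :
    homSum legCoeff 1 (-z) n = ∑ k ∈ range (n + 1), (-1) ^ k * (legCoeff n k : R) * z ^ k := by
  apply sum_congr rfl
  intro k _
  rw [neg_pow, one_pow]
  ring

lemma homSum_legCoeff_neg_one (z : R) :
    homSum legCoeff (-z) 1 n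
      = ∑ k ∈ range (n + 1), (-1) ^ k * (legCoeff n (n - k) : R) * z ^ k := by
  rw [homSum_reflect]
  apply sum_congr rfl
  intro k _
  rw [neg_pow, one_pow]
  ring

lemma homSum_triCoeff_neg_four_mul (z : R) :
    homSum triCoeff (-4 * z) 1 n
      = ∑ k ∈ range (n + 1), (-4) ^ k * (triCoeff n (n - k) : R) * z ^ k := by
  rw [homSum_reflect]
  apply sum_congr rfl
  intro k _
  rw [mul_pow, one_pow]
  ring

lemma homSum_legCoeff_add (hp : (2 * (n : R) + 1) ^ 2 = 0)
    (hi : ∀ j, 0 < j → j < 2 * n + 1 → (j : R) * i j = 1) (z : R) :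
    homSum legCoeff (-z) 1 n + n.centralBinom * homSum legCoeff 1 (-z) n
      = 2 * binomConv z n := by
  rw [homSum_legCoeff_one_neg, homSum_legCoeff_neg_one, binomConv, mul_sum, mul_sum,
    ← sum_add_distrib]
  apply sum_congr rfl
  intro k hk
  have hk := Nat.lt_succ_iff.1 (mem_range.1 hk)
  rw [legCoeff_sub hp hi k hk, centralBinom_mul_centralBinom_sub hp hi k hk]
  ring

lemma homSum_triCoeff_eq (hp : (2 * (n : R) + 1) ^ 2 = 0)
    (hi : ∀ j, 0 < j → j < 2 * n + 1 → (j : R) * i j = 1) (z : R) :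
    4 ^ n * homSum triCoeff (-4 * z) 1 n
      = 4 ^ n * binomConv z n + n.centralBinom * homSum triCoeff 4 (-z) n
        - 4 ^ n * (n.centralBinom * homSum legCoeff 1 (-z) n) := by
  rw [homSum_triCoeff_neg_four_mul, homSum_legCoeff_one_neg, binomConv, homSum, mul_sum, mul_sum,
    mul_sum, mul_sum, mul_sum, ← sum_add_distrib, ← sum_sub_distrib]
  apply sum_congr rfl
  intro k hk
  have hk := Nat.lt_succ_iff.1 (mem_range.1 hk)
  rw [triCoeff_sub hp hi k hk, centralBinom_mul_centralBinom_sub hp hi k hk, neg_pow z,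
    ← mul_assoc (_ * _) _ (z ^ k), triCoeff_mul_four_pow_sub hp hi k hk]
  ring

lemma exists_binomConv_eq (hp : (2 * (n : R) + 1) ^ 2 = 0)
    (hi : ∀ j, 0 < j → j < 2 * n + 1 → (j : R) * i j = 1) (z : R) :
    ∃ x, binomConv z n = n.centralBinom * homSum legCoeff 1 (-z) n + (2 * n + 1) * x := by
  refine ⟨∑ k ∈ range (n + 1), n.centralBinom * ((-1) ^ k * legCoeff n k)
    * (evenSum i k - oddSum i k) * z ^ k, ?_⟩
  rw [homSum_legCoeff_one_neg, binomConv, mul_sum, mul_sum, ← sum_add_distrib]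
  apply sum_congr rfl
  intro k hk
  have hk := Nat.lt_succ_iff.1 (mem_range.1 hk)
  rw [centralBinom_mul_centralBinom_sub hp hi k hk]
  ring

lemma sum_Icc_inv_eq (hi : ∀ j, 0 < j → j < 2 * n + 1 → (j : R) * i j = 1) (k : ℕ)
    (hk : k ≤ n) : ∑ j ∈ Icc 1 k, i (k + j) = oddSum i k - evenSum i k := by
  have h : ∀ m, ∑ j ∈ Icc 1 m, i (m + j) = ∑ j ∈ range m, i (m + 1 + j) := by
    intro m
    rw [range_eq_Ico]
    refine (sum_Ico_add' (fun j ↦ i (m + j)) 0 m 1).symm.trans (sum_congr rfl fun j _ ↦ ?_)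
    congr 1
    ring
  rw [h]
  induction k with
  | zero => simp [oddSum, evenSum]
  | succ k ih =>
    have ih := ih (by omega)
    have h1 : i (k + 1) = 2 * i (2 * k + 2) := by
      have h1 := hi (k + 1) (by omega) (by omega)
      have h2 := hi (2 * k + 2) (by omega) (by omega)
      push_cast at h1 h2
      linear_combination 2 * i (2 * k + 2) * h1 - i (k + 1) * h2
    rw [oddSum_succ, evenSum_succ, sum_range_succ, sum_congr rfl (g := fun j ↦ i (k + 1 + (j + 1)))]
    · have := sum_range_succ' (fun j ↦ i (k + 1 + j)) k
      rw [sum_range_succ, ih, add_zero, h1, show k + 1 + k = 2 * k + 1 by ring] at this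
      rw [show k + 1 + 1 + k = 2 * k + 2 by ring]
      linear_combination -this
    · intro j _
      congr 1
      ring

lemma homSum_legSqCoeff_one_neg (hp : (2 * (n : R) + 1) ^ 2 = 0)
    (hi : ∀ j, 0 < j → j < 2 * n + 1 → (j : R) * i j = 1) :
    homSum legSqCoeff (1 : R) (-16) n = ∑ k ∈ range (n + 1), (k.centralBinom : R) ^ 3 := by
  apply sum_congr rfl
  intro k hk
  have hk := Nat.lt_succ_iff.1 (mem_range.1 hk)
  rw [pow_succ _ 2, legCoeff_eq_centralBinom_sq hp hi k hk, legSqCoeff, neg_pow, one_pow]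
  push_cast
  ring

lemma homSum_legSqCoeff_neg_one (hp : (2 * (n : R) + 1) ^ 2 = 0)
    (hi : ∀ j, 0 < j → j < 2 * n + 1 → (j : R) * i j = 1) :
    homSum legSqCoeff (-256 : R) 1 n = ∑ k ∈ range (n + 1), (n.centralBinom : R) ^ 2
      * k.centralBinom ^ 3 * (1 - 3 * (2 * n + 1) * ∑ j ∈ Icc 1 k, i (k + j)) := by
  rw [homSum_reflect]
  apply sum_congr rfl
  intro k hk
  have hk := Nat.lt_succ_iff.1 (mem_range.1 hk)
  apply (isUnit_centralBinom hi k hk).mul_left_cancel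
  have h1 := legCoeff_sub hp hi k hk
  have h2 := centralBinom_mul_centralBinom_sub hp hi k hk
  have h3 := legCoeff_eq_centralBinom_sq hp hi k hk
  rw [sum_Icc_inv_eq hi k hk, legSqCoeff, one_pow, show (-256 : R) = -1 * (16 * 16) by norm_num,
    mul_pow, mul_pow]
  push_cast
  set B : R := (n.centralBinom : R)
  set b : R := (k.centralBinom : R)
  set f : R := (-1) ^ k * legCoeff n k
  set q : R := (-1) ^ k * (legCoeff n (n - k) : R)
  set h : R := evenSum i k - oddSum i k
  calc _ = q * (b * (n - k).centralBinom) * (16 ^ k * 16 ^ k) := by ring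
    _ = B ^ 2 * (1 * f * 16 ^ k) ^ 2
        * ((1 + 2 * (2 * n + 1) * h) * (1 + (2 * n + 1) * h)) := by rw [h1, h2]; ring
    _ = B ^ 2 * b ^ 4 * ((1 + 2 * (2 * n + 1) * h) * (1 + (2 * n + 1) * h)) := by
      rw [← h3]; ring
    _ = _ := by linear_combination 2 * B ^ 2 * b ^ 4 * h ^ 2 * hp

end Relations

section Main

variable {R : Type*} [CommRing R] {n : ℕ} {i : ℕ → R}

lemma exists_two_mul_one_add_pow (hprime : (2 * n + 1).Prime) {k ε c : R}
    (hk : k ^ 2 + 3 * k + 4 = 0) (hε : (-7) ^ n = ε + (2 * n + 1) * c) :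
    ∃ x, 2 * ((1 + k) * (1 + k) ^ (2 * n)) = ε * (2 * k + 3) - 1 + (2 * n + 1) * x := by
  obtain ⟨r, hr⟩ := exists_add_pow_prime_eq hprime (2 * k + 3) (-1)
  obtain ⟨s, hs⟩ := exists_add_pow_prime_eq hprime (1 : R) 1
  have h1 : (2 * k + 3 + -1) ^ (2 * n + 1)
      = (1 + 1) ^ (2 * n + 1) * ((1 + k) * (1 + k) ^ (2 * n)) := by
    rw [← pow_succ', ← mul_pow]
    congr 1
    ring
  have h2 : (2 * k + 3) ^ (2 * n + 1) = (2 * k + 3) * (-7) ^ n := by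
    rw [pow_succ', pow_mul]
    congr 2
    linear_combination 4 * hk
  have h3 : (-1 : R) ^ (2 * n + 1) = -1 := by
    rw [pow_succ, pow_mul]
    simp
  rw [h1, h2, h3, hs, hε] at hr
  push_cast at hr
  simp only [one_pow] at hr
  refine ⟨(2 * k + 3) * c - (2 * k + 3) * r - s * ((1 + k) * (1 + k) ^ (2 * n)), ?_⟩
  linear_combination hr

lemma one_add_pow_mul_homSum_legCoeff {k : R} (hk : k ^ 2 + 3 * k + 4 = 0) :
    (1 + k) ^ (2 * n) * homSum legCoeff (-k ^ 2) 1 n = binomConv (k ^ 2) n := by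
  rw [← homSum_legCoeff_landen, pow_mul, ← homSum_mul_mul, mul_one]
  congr 1
  linear_combination (-k ^ 2 + k : R) * hk

lemma exists_neg_seven_pow (hprime : (2 * n + 1).Prime) (h7 : 2 * n + 1 ≠ 7) :
    ∃ ε : ℤ, (ε = 1 ∨ ε = -1) ∧ ∃ c : R, (-7) ^ n = ε + (2 * n + 1) * c := by
  have := Fact.mk hprime
  have h0 : ((-7 : ℤ) : ZMod (2 * n + 1)) ≠ 0 := by
    rw [Ne, ZMod.intCast_zmod_eq_zero_iff_dvd, Int.dvd_neg]
    intro h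
    have h' : 2 * n + 1 ∣ 7 := by exact_mod_cast h
    rcases (Nat.dvd_prime (by norm_num)).1 h' with h' | h'
    · exact hprime.one_lt.ne' h'
    · exact h7 h'
  have key : ∃ ε : ℤ, (ε = 1 ∨ ε = -1) ∧ ((2 * n + 1 : ℕ) : ℤ) ∣ (-7) ^ n - ε := by
    have h := ZMod.pow_div_two_eq_neg_one_or_one _ h0
    rw [show (2 * n + 1) / 2 = n by omega] at h
    rcases h with h | h
    · refine ⟨1, Or.inl rfl, ?_⟩
      rw [← ZMod.intCast_zmod_eq_zero_iff_dvd]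
      push_cast at h ⊢
      rw [h, sub_self]
    · refine ⟨-1, Or.inr rfl, ?_⟩
      rw [← ZMod.intCast_zmod_eq_zero_iff_dvd]
      push_cast at h ⊢
      rw [h, sub_self]
  obtain ⟨ε, hε, c, hc⟩ := key
  refine ⟨ε, hε, c, ?_⟩
  have := congrArg (Int.cast : ℤ → R) hc
  push_cast at this
  linear_combination this

lemma homSum_triCoeff_sq_eq (hprime : (2 * n + 1).Prime) (h7 : 2 * n + 1 ≠ 7) (hn : 2 ≤ n)
    (hp : (2 * (n : R) + 1) ^ 2 = 0)
    (hi : ∀ j, 0 < j → j < 2 * n + 1 → (j : R) * i j = 1) {k : R}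
    (hk : k ^ 2 + 3 * k + 4 = 0) :
    homSum triCoeff (-4 * k ^ 2) 1 n ^ 2
      = (n.centralBinom * homSum legCoeff 1 (-k ^ 2) n) ^ 2 := by
  have h2 : IsUnit (2 : R) := isUnit_natCast_of_inv hi 2 (by omega) (by omega)
  have h4 : IsUnit ((4 : R) ^ n) := by
    rw [show (4 : R) = 2 ^ 2 by norm_num]
    exact (h2.pow 2).pow n
  have h7' : IsUnit (7 : R) := by
    refine isUnit_natCast_of_coprime (p := 2 * n + 1) (m := 7) (by exact_mod_cast hp) ?_
    exact (Nat.coprime_primes (by norm_num) hprime).2 h7.symm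
  have hk' : (-3 - k) ^ 2 + 3 * (-3 - k) + 4 = 0 := by linear_combination hk
  have hsq : (-3 - k) ^ 2 = 1 - k ^ 2 := by linear_combination 2 * hk
  have e1 := one_add_pow_mul_homSum_legCoeff (n := n) hk
  have e2 := homSum_legCoeff_add hp hi (k ^ 2)
  have e1' := one_add_pow_mul_homSum_legCoeff (n := n) hk'
  have e2' := homSum_legCoeff_add hp hi ((-3 - k) ^ 2)
  have e3 := homSum_triCoeff_eq hp hi (k ^ 2)
  have e4 := homSum_triCoeff_four_neg (k ^ 2) n
  have e5 := homSum_legCoeff_add hp hi (1 : R)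
  obtain ⟨X, hX⟩ := exists_binomConv_eq hp hi (k ^ 2)
  obtain ⟨X', hX'⟩ := exists_binomConv_eq hp hi ((-3 - k) ^ 2)
  rw [hsq] at e1' e2' hX'
  rw [homSum_legCoeff_one_sub] at e2' hX'
  rw [e4] at e3
  rw [homSum_legCoeff_neg_one_one, homSum_legCoeff_one_neg_one, binomConv_one] at e5
  have hab : (1 + k) ^ (2 * n) * (1 + (-3 - k)) ^ (2 * n) = 4 ^ n := by
    rw [← mul_pow, pow_mul]
    congr 1
    linear_combination (k ^ 2 + 3 * k) * hk
  have hs : ((-1 : R) ^ n) ^ 2 = 1 := by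
    rw [← pow_mul, mul_comm, pow_mul]
    simp
  obtain ⟨ε, hε, c, hc⟩ := exists_neg_seven_pow (R := R) hprime h7
  obtain ⟨x, hx⟩ := exists_two_mul_one_add_pow hprime hk hc
  obtain ⟨x', hx'⟩ := exists_two_mul_one_add_pow hprime hk' hc
  set P : R := 2 * (n : R) + 1
  set B : R := (n.centralBinom : R)
  set s : R := (-1) ^ n
  set b : R := 4 ^ n
  set W := homSum triCoeff (-4 * k ^ 2) 1 n
  set f := homSum legCoeff 1 (-k ^ 2) n
  set Q := homSum legCoeff (-k ^ 2) 1 n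
  set Q' := homSum legCoeff (-(1 - k ^ 2)) 1 n
  set r := binomConv (k ^ 2) n
  set r' := binomConv (1 - k ^ 2) n
  set a := (1 + k) ^ (2 * n)
  set a' := (1 + (-3 - k)) ^ (2 * n)
  generalize hg : B * f = g at *
  rcases hε with rfl | rfl
  · push_cast at hx hx'
    obtain ⟨u, hu⟩ := (h2.pow 2).exists_right_inv
    obtain ⟨α, ha⟩ : ∃ α, a = 1 + P * α := by
      refine ⟨u * x * (-2 - k), ?_⟩
      linear_combination (-2 - k) * u * hx - (a - 1) * hu + 2 * u * (a - 1) * hk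
    obtain ⟨α', ha'⟩ : ∃ α, a' = 1 + P * α := by
      refine ⟨u * x' * (1 + k), ?_⟩
      linear_combination (1 + k) * u * hx' - (a' - 1) * hu + 2 * u * (a' - 1) * hk
    rw [ha] at e1 hab
    rw [ha'] at e1' hab
    have hr : r = g - P * α * g := by
      linear_combination (1 - 2 * P * α) * (e1 - (1 + P * α) * e2)
        + 2 * α ^ 2 * (2 * r - g) * hp
    have hr' : r' = s * g - P * α' * (s * g) := by
      rw [← hg]
      linear_combination (1 - 2 * P * α') * (e1' - (1 + P * α') * e2')
        + 2 * α' ^ 2 * (2 * r' - B * (s * f)) * hp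
    have hW : W = g := by
      apply h4.mul_left_cancel
      linear_combination e3 + b * hr + B * hr' + g * (1 - P * α') * e5
        - g * (1 - P * α - 2 * P * α') * hab
        - g * (α ^ 2 * (1 + P * α') + 2 * α' * (α + α' + P * α * α')) * hp
    rw [hW]
  · push_cast at hx hx'
    obtain ⟨u, hu⟩ := (h2.mul h7').exists_right_inv
    obtain ⟨v, hv⟩ : ∃ v, g = P * v := by
      refine ⟨u * (2 * k + 3) * (2 * (1 + k) * X + 2 * (2 * k + 4) * X - x * (g + 2 * P * X)), ?_⟩
      linear_combination u * (2 * k + 3) * (2 * (1 + k) * e1 - Q * hx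
        - (-(2 * k + 3) - 1 + P * x) * e2
        - (2 * (-(2 * k + 3) - 1 + P * x) - 2 * (1 + k)) * hX) - g * hu + 8 * u * g * hk
    obtain ⟨w, hw⟩ : ∃ w, b * W = P * w := by
      refine ⟨b * X + B * (s * v + X'), ?_⟩
      linear_combination e3 + b * hX + B * hX' + B * s * hg + B * s * hv
    have hW : (b * W) ^ 2 = 0 := by rw [hw, mul_pow, hp, zero_mul]
    apply (h4.pow 2).mul_left_cancel
    rw [← mul_pow, hW, hv, mul_pow, hp, zero_mul, mul_zero]

end Main

lemma mul_sum_centralBinom_eq_zero {R : Type*} [CommRing R] {n : ℕ} {i : ℕ → R}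
    (hprime : (2 * n + 1).Prime) (h7 : 2 * n + 1 ≠ 7) (hn : 2 ≤ n)
    (hp : (2 * (n : R) + 1) ^ 2 = 0)
    (hi : ∀ j, 0 < j → j < 2 * n + 1 → (j : R) * i j = 1) {k : R}
    (hk : k ^ 2 + 3 * k + 4 = 0) :
    (2 * (n : R) + 1)
      * ∑ m ∈ Icc 1 n, (m.centralBinom : R) ^ 3 * ∑ j ∈ Icc 1 m, i (m + j) = 0 := by
  have h3 : IsUnit (3 : R) := isUnit_natCast_of_inv hi 3 (by omega) (by omega)
  have hB := (isUnit_centralBinom hi n le_rfl).pow 2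
  have hz : (k ^ 2) ^ 2 - k ^ 2 = -16 := by
    linear_combination (k ^ 2 - 3 * k + 4) * hk
  have h := homSum_triCoeff_sq_eq hprime h7 hn hp hi hk
  rw [homSum_triCoeff_sq, mul_pow, homSum_legCoeff_one_neg_sq, hz,
    show (16 * -16 : R) = -256 by norm_num, homSum_legSqCoeff_neg_one hp hi,
    homSum_legSqCoeff_one_neg hp hi] at h
  have h0 : ∑ m ∈ range (n + 1), (m.centralBinom : R) ^ 3 * ∑ j ∈ Icc 1 m, i (m + j)
      = ∑ m ∈ Icc 1 n, (m.centralBinom : R) ^ 3 * ∑ j ∈ Icc 1 m, i (m + j) := by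
    rw [range_eq_Ico, sum_eq_sum_Ico_succ_bot (by omega)]
    simp only [Nat.centralBinom_zero, zero_add]
    rw [Icc_eq_empty (by omega), sum_empty, mul_zero, zero_add]
    rfl
  rw [← h0]
  apply (h3.mul hB).mul_left_cancel
  rw [mul_zero, ← sub_eq_zero.2 h.symm]
  simp only [mul_sum, ← sum_sub_distrib]
  apply sum_congr rfl
  intro m _
  simp only [mul_sub, mul_one, mul_sum, sub_sub_cancel]
  apply sum_congr rfl
  intro j _
  ring

lemma PadicInt.norm_le_of_toZModPow_two {p : ℕ} [Fact p.Prime] {x : ℤ_[p]}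
    (hx : PadicInt.toZModPow 2 ((p : ℤ_[p]) * x) = 0) : ‖x‖ ≤ (p : ℝ) ^ (-1 : ℤ) := by
  rw [← RingHom.mem_ker, PadicInt.ker_toZModPow, Ideal.mem_span_singleton, pow_two] at hx
  have hp : (p : ℤ_[p]) ≠ 0 := by exact_mod_cast (Fact.out : p.Prime).ne_zero
  have h := (PadicInt.norm_le_pow_iff_mem_span_pow x 1).2
    (by rw [pow_one, Ideal.mem_span_singleton]; exact (mul_dvd_mul_iff_left hp).1 hx)
  exact_mod_cast h

lemma PadicInt.natCast_mul_inverse {p : ℕ} [Fact p.Prime] (j : ℕ) (h0 : 0 < j) (hj : j < p) :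
    (j : ℤ_[p]) * Ring.inverse (j : ℤ_[p]) = 1 := by
  apply Ring.mul_inverse_cancel
  rw [PadicInt.isUnit_iff, PadicInt.norm_natCast_eq_one_iff]
  exact Nat.coprime_of_lt_prime h0.ne' hj Fact.out

lemma QuadraticAlgebra.omega_sq_add_three_mul_add_four {A : Type*} [CommRing A] :
    (omega : QuadraticAlgebra A (-4) (-3)) ^ 2 + 3 * omega + 4 = 0 := by
  rw [pow_two, omega_mul_omega_eq_add]
  ext <;> simp

theorem stmt5 (p : ℕ) [Fact p.Prime] (hp : 3 < p) :
    ‖((∑ i ∈ Icc 1 ((p - 1) / 2),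
          (Nat.choose (2 * i) i : ℚ) ^ 3 * ∑ j ∈ Icc 1 i, (1 : ℚ) / (i + j)) : ℚ_[p])‖
      ≤ (p : ℝ) ^ (-1 : ℤ) := by
  rcases eq_or_ne p 7 with rfl | h7
  · have h : (∑ i ∈ Icc 1 3, ((Nat.choose (2 * i) i : ℚ) : ℚ_[7]) ^ 3
        * ((∑ j ∈ Icc 1 i, (1 : ℚ) / (i + j) : ℚ) : ℚ_[7])) = 7 * ((2170 : ℤ) : ℚ_[7]) / (3 : ℕ) := by
      have h : ∑ i ∈ Icc 1 3, (Nat.choose (2 * i) i : ℚ) ^ 3 * ∑ j ∈ Icc 1 i, (1 : ℚ) / (i + j)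
          = 7 * 2170 / 3 := by
        norm_num [sum_Icc_succ_top, Nat.choose]
      have := congrArg (Rat.cast : ℚ → ℚ_[7]) h
      push_cast at this ⊢
      exact this
    have h3 : ‖((3 : ℕ) : ℚ_[7])‖ = 1 := by
      rw [Padic.norm_natCast_eq_one_iff]
      norm_num
    have h7 : ‖(7 : ℚ_[7])‖ = 7⁻¹ := by
      simpa using Padic.norm_p (p := 7)
    have h0 := Padic.norm_int_le_one (p := 7) 2170
    rw [show (7 - 1) / 2 = 3 by norm_num, h, norm_div, norm_mul, h3, h7, div_one, zpow_neg_one]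
    push_cast at h0 ⊢
    linarith
  obtain ⟨n, hn⟩ := (Fact.out : p.Prime).odd_of_ne_two (by omega)
  have hn2 : (p - 1) / 2 = n := by omega
  rw [hn2]
  set x : ℤ_[p] := ∑ m ∈ Icc 1 n, (m.centralBinom : ℤ_[p]) ^ 3
    * ∑ j ∈ Icc 1 m, Ring.inverse ((m + j : ℕ) : ℤ_[p]) with hx
  have hinv : ∀ j : ℕ, 0 < j → j < p →
      ((Ring.inverse (j : ℤ_[p]) : ℤ_[p]) : ℚ_[p]) = 1 / (j : ℚ_[p]) := by
    intro j h0 hj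
    have h := congrArg (Subtype.val : ℤ_[p] → ℚ_[p]) (PadicInt.natCast_mul_inverse j h0 hj)
    have h0' : (j : ℚ_[p]) ≠ 0 := by exact_mod_cast h0.ne'
    rw [eq_div_iff h0', mul_comm]
    simpa using h
  convert PadicInt.norm_le_of_toZModPow_two (x := x) ?_ using 1
  · rw [PadicInt.norm_def, hx, PadicInt.coe_sum]
    push_cast
    congr 1
    apply sum_congr rfl
    intro m hm
    rw [Nat.centralBinom]
    rw [PadicInt.coe_sum]
    congr 1
    apply sum_congr rfl
    intro j hj
    have h1 := mem_Icc.1 hm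
    have h2 := mem_Icc.1 hj
    have h3 := hinv (m + j) (by omega) (by omega)
    push_cast at h3
    exact h3.symm
  · subst hn
    let φ := (algebraMap (ZMod ((2 * n + 1) ^ 2))
      (QuadraticAlgebra (ZMod ((2 * n + 1) ^ 2)) (-4) (-3))).comp (PadicInt.toZModPow 2)
    apply (QuadraticAlgebra.algebraMap_injective (R := ZMod ((2 * n + 1) ^ 2)) (a := -4) (b := -3))
    rw [map_zero]
    change φ _ = 0
    have h := mul_sum_centralBinom_eq_zero (i := fun j ↦ φ (Ring.inverse (j : ℤ_[2 * n + 1])))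
      Fact.out h7 (by omega) (n := n) (k := QuadraticAlgebra.omega) ?_ ?_ ?_
    · simpa [hx, map_ofNat φ] using h
    · have := congrArg (algebraMap _ (QuadraticAlgebra (ZMod ((2 * n + 1) ^ 2)) (-4) (-3)))
        (ZMod.natCast_self ((2 * n + 1) ^ 2))
      rw [map_natCast, map_zero] at this
      exact_mod_cast this
    · intro j h0 hj
      rw [← map_natCast φ, ← map_mul, PadicInt.natCast_mul_inverse j h0 hj, map_one]
    · exact QuadraticAlgebra.omega_sq_add_three_mul_add_four
end

section
/- Let λ ∈ {−8, −1/8, 4, 1/4, 64, 1/64, −1} (the rational values for which E_λ has complex multiplication) and let p be a prime with p > 3 such that λ ∈ ℤ_p, λ ≢ 0 (mod p) and λ ≢ 1 (mod p). Then Σ_{i=0}^{(p−1)/2} C(2i,i)³ (λ/64)^i · ( 6(H_{2i} − H_i) + ((λ/64)^{p−1} − 1)/p ) ≡ 0 (mod p ℤ_p). -/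
open Finset

/-- The harmonic sum `H_k = ∑_{j=1}^k 1/j`. -/
def harmonicSum (k : ℕ) : ℚ := ∑ j ∈ Icc 1 k, (1 : ℚ) / j

open Polynomial in
/-- The Euler operator `X · d/dX` on integer polynomials. -/
noncomputable def euler (f : ℤ[X]) : ℤ[X] := X * derivative f

open Polynomial in
theorem coeff_euler (f : ℤ[X]) (k : ℕ) : (euler f).coeff k = k * f.coeff k := by
  cases k with
  | zero => simp [euler]
  | succ k => rw [euler, coeff_X_mul, coeff_derivative]; push_cast; ring

/-- The coefficients `C(m,k) C(m+k,k)` of the shifted Legendre polynomials, up to sign. -/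
def legendreCoeff (m k : ℕ) : ℕ := m.choose k * (m + k).choose k

theorem succ_sq_mul_legendreCoeff_succ (m k : ℕ) :
    ((k : ℤ) + 1) ^ 2 * legendreCoeff m (k + 1) =
      ((m : ℤ) * (m + 1) - k * (k + 1)) * legendreCoeff m k := by
  have h1 : ((m.choose (k + 1) : ℕ) : ℤ) * (k + 1) = m.choose k * (m - k) := by
    rcases le_or_gt k m with h | h
    · have := Nat.choose_succ_right_eq m k
      zify [h] at this
      exact this
    · simp [Nat.choose_eq_zero_of_lt h, Nat.choose_eq_zero_of_lt (Nat.lt_succ_of_lt h)]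
  have h2 : (((m + (k + 1)).choose (k + 1) : ℕ) : ℤ) * (k + 1) =
      (m + k + 1) * (m + k).choose k := by
    have := Nat.add_one_mul_choose_eq (m + k) k
    zify at this
    rw [← add_assoc, ← this]
  simp only [legendreCoeff]
  push_cast
  linear_combination ((m + (k + 1)).choose (k + 1) : ℤ) * (k + 1) * h1 +
    (m.choose k : ℤ) * (m - k) * h2

open Polynomial in
/-- The polynomial `∑ C(2k,k) C(m,k) C(m+k,k) (-X)^k`. -/
noncomputable def clausenPoly (m : ℕ) : ℤ[X] :=
  ∑ k ∈ range (m + 1), C ((-1 : ℤ) ^ k * (Nat.centralBinom k * legendreCoeff m k : ℕ)) * X ^ k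

open Polynomial in
theorem coeff_clausenPoly (m k : ℕ) :
    (clausenPoly m).coeff k = (-1 : ℤ) ^ k * (Nat.centralBinom k * legendreCoeff m k : ℕ) := by
  rw [clausenPoly, finsetSum_coeff]
  simp_rw [coeff_C_mul_X_pow]
  simp +contextual [legendreCoeff, Nat.choose_eq_zero_of_lt]

open Polynomial in
theorem coeff_shiftedLegendre_eq (m k : ℕ) :
    (shiftedLegendre m).coeff k = (-1 : ℤ) ^ k * legendreCoeff m k := by
  rw [coeff_shiftedLegendre, legendreCoeff, Nat.choose_symm_add]
  push_cast
  ring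

open Polynomial in
theorem shiftedLegendre_ode (m : ℕ) :
    X * (1 - X) * derivative (derivative (shiftedLegendre m))
      + (1 - 2 * X) * derivative (shiftedLegendre m)
      + C ((m : ℤ) * (m + 1)) * shiftedLegendre m = 0 := by
  have key : euler (euler (shiftedLegendre m)) =
      X * (euler (euler (shiftedLegendre m)) + euler (shiftedLegendre m)
        - C ((m : ℤ) * (m + 1)) * shiftedLegendre m) := by
    ext k
    cases k with
    | zero => simp [coeff_euler]
    | succ k =>
      simp only [coeff_X_mul, coeff_euler, coeff_sub, coeff_add, coeff_C_mul,
        coeff_shiftedLegendre_eq, pow_succ]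
      push_cast
      linear_combination -(-1 : ℤ) ^ k * succ_sq_mul_legendreCoeff_succ m k
  apply mul_left_cancel₀ (X_ne_zero (R := ℤ))
  simp only [euler, derivative_mul, derivative_X] at key
  linear_combination key

open Polynomial in
theorem clausenPoly_ode (m : ℕ) :
    X ^ 2 * (1 - 4 * X) * derivative (derivative (derivative (clausenPoly m)))
      + (3 * X - 18 * X ^ 2) * derivative (derivative (clausenPoly m))
      + (1 + (4 * C ((m : ℤ) * (m + 1)) - 12) * X) * derivative (clausenPoly m)
      + 2 * C ((m : ℤ) * (m + 1)) * clausenPoly m = 0 := by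
  have key : euler (euler (euler (clausenPoly m))) =
      X * (C 4 * euler (euler (euler (clausenPoly m))) + C 6 * euler (euler (clausenPoly m))
        + C (2 - 4 * ((m : ℤ) * (m + 1))) * euler (clausenPoly m)
        - C (2 * ((m : ℤ) * (m + 1))) * clausenPoly m) := by
    ext k
    cases k with
    | zero => simp [coeff_euler]
    | succ k =>
      have h := Nat.succ_mul_centralBinom_succ k
      zify at h
      simp only [coeff_X_mul, coeff_euler, coeff_sub, coeff_add, coeff_C_mul,
        coeff_clausenPoly, pow_succ]
      push_cast
      linear_combination -(-1 : ℤ) ^ k * (k + 1) * Nat.centralBinom (k + 1) *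
        succ_sq_mul_legendreCoeff_succ m k + (-1 : ℤ) ^ k * legendreCoeff m k *
          (k * (k + 1) - (m : ℤ) * (m + 1)) * h
  apply mul_left_cancel₀ (X_ne_zero (R := ℤ))
  simp only [euler, derivative_mul, derivative_X, C_mul, C_sub, derivative_add,
    derivative_one, map_ofNat] at key
  simp only [C_mul]
  linear_combination key

open Polynomial in
/-- Uniqueness of the solution holomorphic at `0` of the third order equation satisfied by the
squares of the shifted Legendre polynomials. -/
theorem eq_zero_of_ode {M : ℤ} {f : ℤ[X]} (h0 : f.coeff 0 = 0)
    (h : (X * (1 - X)) ^ 2 * derivative (derivative (derivative f))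
      + 3 * (X * (1 - X)) * (1 - 2 * X) * derivative (derivative f)
      + ((1 - 2 * X) ^ 2 - 2 * (X * (1 - X)) + 4 * C M * (X * (1 - X))) * derivative f
      + 2 * C M * (1 - 2 * X) * f = 0) : f = 0 := by
  have key : euler (euler (euler f - X * euler f) - X * euler (euler f - X * euler f)) =
      X * (X * (C (4 * M) * euler f + C (4 * M) * f) - (C (4 * M) * euler f + C (2 * M) * f)) := by
    simp only [euler, derivative_mul, derivative_X, derivative_add, derivative_sub, C_mul,
      derivative_one, map_ofNat]
    linear_combination X * h
  ext k
  induction k using Nat.strong_induction_on with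
  | _ k ih =>
    rcases k with - | - | k
    · simpa using h0
    · have := congrArg (coeff · (0 + 1)) key
      simpa [coeff_euler, coeff_X_mul, h0, -zero_add] using this
    · have := congrArg (coeff · (k + 2)) key
      have h1 := ih k (by omega)
      have h2 := ih (k + 1) (by omega)
      simp only [coeff_euler, coeff_sub, coeff_X_mul, coeff_add, coeff_C_mul, h1, h2, coeff_zero,
        show k + 2 = k + 1 + 1 from rfl] at this
      have hk : ((k : ℤ) + 2) ≠ 0 := by positivity
      have h3 : ((k : ℤ) + 2) ^ 3 * f.coeff (k + 1 + 1) = 0 := by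
        push_cast at this
        linear_combination this
      simpa [hk] using h3

open Polynomial in
theorem shiftedLegendre_sq (m : ℕ) :
    shiftedLegendre m ^ 2 = (clausenPoly m).comp (X * (1 - X)) := by
  rw [← sub_eq_zero]
  apply eq_zero_of_ode (M := (m : ℤ) * (m + 1))
  · simp [coeff_zero_eq_eval_zero, eval_comp]
    simp [← coeff_zero_eq_eval_zero, coeff_clausenPoly, coeff_shiftedLegendre_eq, legendreCoeff]
  · have h1 := shiftedLegendre_ode m
    have h2 := congrArg derivative h1
    have h3 := congrArg (fun f => f.comp (X * (1 - X))) (clausenPoly_ode m)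
    simp only [derivative_mul, derivative_X, derivative_add, derivative_sub, derivative_one,
      derivative_zero, derivative_C, derivative_ofNat] at h2
    simp only [add_comp, mul_comp, sub_comp, pow_comp, C_comp, X_comp, one_comp, zero_comp,
      ofNat_comp] at h3
    simp only [derivative_mul, derivative_X, derivative_add, derivative_sub, derivative_one,
      derivative_zero, pow_two, derivative_comp]
    linear_combination (2 * (X * (1 - X)) * shiftedLegendre m) * h2
      + (6 * (X * (1 - X)) * derivative (shiftedLegendre m)
        + 2 * (1 - 2 * X) * shiftedLegendre m) * h1 - (1 - 2 * X) * h3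

section CharP

variable {K : Type*} [Field K]

/-- The harmonic sum `∑_{j=1}^k 1/j` in a field. -/
def fieldHarmonic (K : Type*) [Field K] (k : ℕ) : K := ∑ j ∈ range k, ((j + 1 : ℕ) : K)⁻¹

/-- The sum `∑ C(n,i)^r y^i`. -/
def choosePowSum (n r : ℕ) (y : K) : K := ∑ i ∈ range (n + 1), (n.choose i : K) ^ r * y ^ i

/-- The formal derivative of `∑ C(n,i)^r y^i` in the direction of the index `i`, with `q` in the
role of the logarithm of `y`. -/
def choosePowDeriv (n r : ℕ) (y q : K) : K :=
  ∑ i ∈ range (n + 1), (n.choose i : K) ^ r * y ^ i *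
    (r * (fieldHarmonic K (n - i) - fieldHarmonic K i) + q)

theorem map_choosePowSum {L : Type*} [Field L] (f : K →+* L) (n r : ℕ) (y : K) :
    f (choosePowSum n r y) = choosePowSum n r (f y) := by
  simp [choosePowSum]

theorem choosePowSum_inv (n r : ℕ) {y : K} (hy : y ≠ 0) :
    choosePowSum n r y⁻¹ = y⁻¹ ^ n * choosePowSum n r y := by
  rw [choosePowSum, ← sum_range_reflect, choosePowSum, mul_sum]
  refine sum_congr rfl fun i hi => ?_
  have hi : i ≤ n := by simpa [Nat.lt_succ_iff] using hi
  obtain ⟨k, rfl⟩ := Nat.exists_eq_add_of_le hi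
  have h : y⁻¹ ^ i * y ^ i = 1 := by rw [← mul_pow, inv_mul_cancel₀ hy, one_pow]
  rw [show i + k + 1 - 1 - i = k by omega, pow_add, Nat.choose_symm_add]
  linear_combination -(((i + k).choose k : K) ^ r * y⁻¹ ^ k) * h

theorem choosePowDeriv_inv (n r : ℕ) {y : K} (q : K) (hy : y ≠ 0) :
    choosePowDeriv n r y⁻¹ (-q) = -(y⁻¹ ^ n * choosePowDeriv n r y q) := by
  rw [choosePowDeriv, ← sum_range_reflect, choosePowDeriv, mul_sum, ← sum_neg_distrib]
  refine sum_congr rfl fun i hi => ?_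
  have hi : i ≤ n := by simpa [Nat.lt_succ_iff] using hi
  obtain ⟨k, rfl⟩ := Nat.exists_eq_add_of_le hi
  have h : y⁻¹ ^ i * y ^ i = 1 := by rw [← mul_pow, inv_mul_cancel₀ hy, one_pow]
  rw [show i + k + 1 - 1 - i = k by omega, pow_add, Nat.choose_symm_add,
    show i + k - k = i by omega, show i + k - i = k by omega]
  linear_combination (((i + k).choose k : K) ^ r * y⁻¹ ^ k *
    (r * (fieldHarmonic K k - fieldHarmonic K i) + q)) * h

variable {p n : ℕ} [CharP K p]

theorem natCast_ne_zero_of_lt {j : ℕ} (h0 : 0 < j) (hj : j < p) : (j : K) ≠ 0 := by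
  rw [Ne, CharP.cast_eq_zero_iff K p]
  exact fun h => absurd (Nat.le_of_dvd h0 h) (by omega)

theorem two_mul_natCast_add_one (hpn : p = 2 * n + 1) : 2 * (n : K) + 1 = 0 := by
  have := CharP.cast_eq_zero K p
  rw [hpn] at this
  exact_mod_cast this

theorem choose_add_eq_neg_one_pow_mul (hpn : p = 2 * n + 1) {k : ℕ} (hk : k ≤ n) :
    ((n + k).choose k : K) = (-1) ^ k * n.choose k := by
  induction k with
  | zero => simp
  | succ k ih =>
    have hk1 : ((k + 1 : ℕ) : K) ≠ 0 := natCast_ne_zero_of_lt (p := p) (by omega) (by omega)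
    have h1 := congrArg (Nat.cast (R := K)) (Nat.choose_succ_right_eq n k)
    have h2 := congrArg (Nat.cast (R := K)) (Nat.add_one_mul_choose_eq (n + k) k)
    have h3 := ih (by omega)
    have h4 := two_mul_natCast_add_one (K := K) hpn
    push_cast [Nat.cast_sub (show k ≤ n by omega)] at h1 h2 hk1
    apply mul_right_cancel₀ hk1
    rw [← add_assoc, ← h2, h3, pow_succ]
    linear_combination (-1 : K) ^ k * n.choose k * h4 + (-1) ^ k * h1

theorem legendreCoeff_eq_neg_one_pow_mul (hpn : p = 2 * n + 1) {k : ℕ} (hk : k ≤ n) :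
    (legendreCoeff n k : K) = (-1) ^ k * (n.choose k : K) ^ 2 := by
  rw [legendreCoeff, Nat.cast_mul, choose_add_eq_neg_one_pow_mul hpn hk]
  ring

theorem centralBinom_eq_neg_four_pow_mul (hpn : p = 2 * n + 1) {k : ℕ} (hk : k ≤ n) :
    (k.centralBinom : K) = (-4) ^ k * n.choose k := by
  induction k with
  | zero => simp
  | succ k ih =>
    have hk1 : ((k + 1 : ℕ) : K) ≠ 0 := natCast_ne_zero_of_lt (p := p) (by omega) (by omega)
    have h1 := congrArg (Nat.cast (R := K)) (Nat.choose_succ_right_eq n k)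
    have h2 := congrArg (Nat.cast (R := K)) (Nat.succ_mul_centralBinom_succ k)
    have h3 := ih (by omega)
    have h4 := two_mul_natCast_add_one (K := K) hpn
    push_cast [Nat.cast_sub (show k ≤ n by omega)] at h1 h2 hk1
    rw [h3] at h2
    apply mul_left_cancel₀ hk1
    rw [h2, pow_succ]
    linear_combination 2 * (-4 : K) ^ k * n.choose k * h4 + 4 * (-4) ^ k * h1

theorem fieldHarmonic_succ (k : ℕ) :
    fieldHarmonic K (k + 1) = fieldHarmonic K k + ((k : K) + 1)⁻¹ := by
  rw [fieldHarmonic, sum_range_succ, ← fieldHarmonic]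
  push_cast
  rfl

theorem fieldHarmonic_add_eq_sub (hpn : p = 2 * n + 1) {i : ℕ} (hi : i ≤ n) :
    fieldHarmonic K (n + i) = fieldHarmonic K (n - i) := by
  induction i with
  | zero => simp
  | succ i ih =>
    obtain ⟨k, rfl⟩ : ∃ k, n = k + i + 1 := ⟨n - i - 1, by omega⟩
    have h1 := ih (by omega)
    rw [show k + i + 1 - i = k + 1 by omega, fieldHarmonic_succ] at h1
    rw [show k + i + 1 - (i + 1) = k by omega, ← add_assoc, fieldHarmonic_succ, h1]
    have h4 := two_mul_natCast_add_one (K := K) hpn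
    push_cast at h4 ⊢
    rw [show (k : K) + i + 1 + i + 1 = -(k + 1) by linear_combination h4, inv_neg]
    ring

theorem fieldHarmonic_sub (hpn : p = 2 * n + 1) {i : ℕ} (hi : i ≤ n) :
    fieldHarmonic K (n - i) =
      fieldHarmonic K n + 2 * fieldHarmonic K (2 * i) - fieldHarmonic K i := by
  induction i with
  | zero => simp [fieldHarmonic]
  | succ i ih =>
    obtain ⟨k, rfl⟩ : ∃ k, n = k + i + 1 := ⟨n - i - 1, by omega⟩
    have h1 := ih (by omega)
    rw [show k + i + 1 - i = k + 1 by omega, fieldHarmonic_succ] at h1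
    rw [show k + i + 1 - (i + 1) = k by omega, show 2 * (i + 1) = 2 * i + 1 + 1 by ring,
      fieldHarmonic_succ (2 * i + 1), fieldHarmonic_succ (2 * i), fieldHarmonic_succ i]
    have h4 := two_mul_natCast_add_one (K := K) hpn
    have e1 : ((k + 1 : ℕ) : K) ≠ 0 := natCast_ne_zero_of_lt (p := p) (by omega) (by omega)
    have e2 : ((2 * i + 1 : ℕ) : K) ≠ 0 := natCast_ne_zero_of_lt (p := p) (by omega) (by omega)
    have e3 : ((i + 1 : ℕ) : K) ≠ 0 := natCast_ne_zero_of_lt (p := p) (by omega) (by omega)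
    have e4 : ((2 : ℕ) : K) ≠ 0 := natCast_ne_zero_of_lt (p := p) (by omega) (by omega)
    push_cast at h4 e1 e2 e3 e4 ⊢
    have a1 : ((k : K) + 1)⁻¹ = -2 * (2 * (i : K) + 1)⁻¹ := by
      field_simp
      linear_combination h4
    have a2 : (2 * (i : K) + 1 + 1)⁻¹ = 2⁻¹ * ((i : K) + 1)⁻¹ := by
      rw [← mul_inv]
      congr 1
      ring
    rw [a1] at h1
    rw [a2]
    linear_combination h1 - ((i : K) + 1)⁻¹ * mul_inv_cancel₀ e4

theorem choose_prime_sub_one {p : ℕ} [CharP K p] [Fact p.Prime] {k : ℕ} (hk : k < p) :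
    ((p - 1).choose k : K) = (-1) ^ k := by
  induction k with
  | zero => simp
  | succ k ih =>
    have h := ih (by omega)
    have h0 : (p.choose (k + 1) : K) = 0 := by
      rw [CharP.cast_eq_zero_iff K p]
      exact (Fact.out : p.Prime).dvd_choose_self (by omega) hk
    have h1 := Nat.choose_succ_succ (p - 1) k
    rw [Nat.succ_eq_add_one, Nat.succ_eq_add_one,
      Nat.sub_add_cancel (Fact.out : p.Prime).one_lt.le] at h1
    rw [h1, Nat.cast_add, h] at h0
    rw [pow_succ]
    linear_combination h0

theorem sum_neg_one_pow_mul_inv (h2 : (2 : K) ≠ 0) (n : ℕ) :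
    ∑ j ∈ range (2 * n), (-1 : K) ^ j * ((j : K) + 1)⁻¹ =
      fieldHarmonic K (2 * n) - fieldHarmonic K n := by
  induction n with
  | zero => simp [fieldHarmonic]
  | succ n ih =>
    rw [show 2 * (n + 1) = 2 * n + 1 + 1 by ring, sum_range_succ, sum_range_succ, ih,
      fieldHarmonic_succ (2 * n + 1), fieldHarmonic_succ (2 * n), fieldHarmonic_succ n]
    push_cast
    have a2 : (2 * (n : K) + 1 + 1)⁻¹ = 2⁻¹ * ((n : K) + 1)⁻¹ := by
      rw [← mul_inv]
      congr 1
      ring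
    rw [a2, pow_succ, pow_mul]
    simp only [even_two, Even.neg_pow, one_pow]
    linear_combination -((n : K) + 1)⁻¹ * mul_inv_cancel₀ h2

open Polynomial in
theorem aeval_shiftedLegendre {R : Type*} [CommRing R] (m : ℕ) (s : R) :
    aeval s (shiftedLegendre m) = ∑ k ∈ range (m + 1), (legendreCoeff m k : R) * (-s) ^ k := by
  rw [shiftedLegendre, map_sum]
  refine sum_congr rfl fun k _ => ?_
  rw [Nat.choose_symm_add, neg_pow s]
  simp [legendreCoeff]
  ring

open Polynomial in
theorem aeval_clausenPoly {R : Type*} [CommRing R] (m : ℕ) (u : R) :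
    aeval u (clausenPoly m) =
      ∑ k ∈ range (m + 1), (Nat.centralBinom k : R) * legendreCoeff m k * (-u) ^ k := by
  rw [clausenPoly, map_sum]
  refine sum_congr rfl fun k _ => ?_
  rw [neg_pow u]
  simp
  ring

open Polynomial in
theorem aeval_shiftedLegendre_eq_choosePowSum (hpn : p = 2 * n + 1) (s : K) :
    aeval s (shiftedLegendre n) = choosePowSum n 2 s := by
  rw [aeval_shiftedLegendre, choosePowSum]
  refine sum_congr rfl fun k hk => ?_
  rw [legendreCoeff_eq_neg_one_pow_mul hpn (by simpa [Nat.lt_succ_iff] using hk), neg_pow s]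
  linear_combination (n.choose k : K) ^ 2 * s ^ k *
    (Even.neg_one_pow (even_two_mul k) : (-1 : K) ^ (2 * k) = 1)

open Polynomial in
theorem aeval_clausenPoly_eq_choosePowSum (hpn : p = 2 * n + 1) (u : K) :
    aeval u (clausenPoly n) = choosePowSum n 3 (-4 * u) := by
  rw [aeval_clausenPoly, choosePowSum]
  refine sum_congr rfl fun k hk => ?_
  have hk : k ≤ n := by simpa [Nat.lt_succ_iff] using hk
  rw [legendreCoeff_eq_neg_one_pow_mul hpn hk, centralBinom_eq_neg_four_pow_mul hpn hk, mul_pow,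
    neg_pow u]
  linear_combination (n.choose k : K) ^ 3 * u ^ k * (-4) ^ k *
    (Even.neg_one_pow (even_two_mul k) : (-1 : K) ^ (2 * k) = 1)

open Polynomial in
theorem aeval_shiftedLegendre_sq {R : Type*} [CommRing R] (m : ℕ) (s : R) :
    aeval s (shiftedLegendre m) ^ 2 = aeval (s * (1 - s)) (clausenPoly m) := by
  rw [← map_pow, shiftedLegendre_sq, aeval_comp]
  simp

theorem choosePowSum_one_sub (hpn : p = 2 * n + 1) (s : K) :
    choosePowSum n 2 (1 - s) = (-1) ^ n * choosePowSum n 2 s := by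
  rw [← aeval_shiftedLegendre_eq_choosePowSum hpn, ← aeval_shiftedLegendre_eq_choosePowSum hpn,
    Polynomial.shiftedLegendre_eval_symm, sub_sub_cancel]

theorem choosePowSum_two_sq (hpn : p = 2 * n + 1) (s : K) :
    choosePowSum n 2 s ^ 2 = choosePowSum n 3 (-4 * (s * (1 - s))) := by
  rw [← aeval_shiftedLegendre_eq_choosePowSum hpn, aeval_shiftedLegendre_sq,
    aeval_clausenPoly_eq_choosePowSum hpn]

theorem choosePowSum_eq_zero_of_pow_eq (hpn : p = 2 * n + 1) {t : K}
    (ht : t * (1 - t) = 1) (htp : t ^ p = 1 - t) (hne : t ≠ 1 - t) :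
    choosePowSum n 2 t = 0 := by
  have h := choosePowSum_one_sub hpn t
  rw [eq_inv_of_mul_eq_one_right ht, choosePowSum_inv _ _ (left_ne_zero_of_mul_eq_one ht)] at h
  by_contra h0
  have h1 := mul_right_cancel₀ h0 h
  have h2 : t ^ (2 * n) = 1 := by
    have := congrArg (·⁻¹ ^ 2) h1
    simp only [inv_pow, inv_inv] at this
    rw [mul_comm, pow_mul, this, ← pow_mul, mul_comm n, pow_mul, neg_one_sq, one_pow, inv_one]
  rw [hpn, pow_succ, h2, one_mul] at htp
  exact hne htp

end CharP

section Padic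

variable {p : ℕ} [Fact p.Prime]

open PadicInt (toZMod)

theorem toZMod_eq_zero_iff_dvd {x : ℤ_[p]} : toZMod x = 0 ↔ (p : ℤ_[p]) ∣ x := by
  rw [← RingHom.mem_ker, PadicInt.ker_toZMod, PadicInt.maximalIdeal_eq_span_p,
    Ideal.mem_span_singleton]

theorem isUnit_iff_toZMod_ne_zero {x : ℤ_[p]} : IsUnit x ↔ toZMod x ≠ 0 := by
  rw [Ne, ← RingHom.mem_ker, PadicInt.ker_toZMod, IsLocalRing.mem_maximalIdeal, mem_nonunits_iff,
    not_not]

/-- The relation `A = B (1 + p δ)` with `δ` reducing to `d`. -/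
def LogRatio (A B : ℤ_[p]) (d : ZMod p) : Prop :=
  ∃ δ : ℤ_[p], toZMod δ = d ∧ A = B * (1 + p * δ)

theorem LogRatio.mul {A B A' B' : ℤ_[p]} {d d' : ZMod p} (h : LogRatio A B d)
    (h' : LogRatio A' B' d') : LogRatio (A * A') (B * B') (d + d') := by
  obtain ⟨δ, rfl, rfl⟩ := h
  obtain ⟨δ', rfl, rfl⟩ := h'
  exact ⟨δ + δ' + p * (δ * δ'), by simp, by ring⟩

theorem LogRatio.refl (A : ℤ_[p]) : LogRatio A A 0 := ⟨0, by simp, by simp⟩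

theorem LogRatio.of_mul {A B A' B' : ℤ_[p]} {d d' : ZMod p} (h : LogRatio (A * A') (B * B') d)
    (h' : LogRatio A' B' d') (h0 : B' ≠ 0) : LogRatio A B (d - d') := by
  obtain ⟨δ, rfl, h⟩ := h
  obtain ⟨δ', rfl, rfl⟩ := h'
  obtain ⟨v, hv⟩ := (isUnit_iff_toZMod_ne_zero (x := 1 + (p : ℤ_[p]) * δ')).2 (by simp)
  have hv1 : (v : ℤ_[p]) * (v⁻¹ : ℤ_[p]ˣ) = 1 := v.mul_inv
  refine ⟨(δ - δ') * (v⁻¹ : ℤ_[p]ˣ), ?_, ?_⟩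
  · have := congrArg toZMod hv1
    rw [hv] at this
    simp only [map_mul, map_add, map_one, map_natCast, CharP.cast_eq_zero, zero_mul, add_zero,
      one_mul] at this
    rw [map_mul, this, map_sub, mul_one]
  · apply mul_right_cancel₀ (mul_ne_zero h0 v.ne_zero)
    rw [← hv] at h
    rw [h]
    linear_combination -(B * B' * p * (δ - δ')) * hv1 - B * B' * hv

theorem LogRatio.sq {A B : ℤ_[p]} {d : ZMod p} (h : LogRatio A B d) :
    LogRatio (A ^ 2) (B ^ 2) (2 * d) := by
  rw [pow_two, pow_two, two_mul]
  exact h.mul h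

theorem LogRatio.unique {A B : ℤ_[p]} {d d' : ZMod p} (h : LogRatio A B d)
    (h' : LogRatio A B d') (hB : B ≠ 0) : d = d' := by
  obtain ⟨δ, rfl, rfl⟩ := h
  obtain ⟨δ', rfl, h⟩ := h'
  have hp : (p : ℤ_[p]) ≠ 0 := Nat.cast_ne_zero.2 (Fact.out : p.Prime).ne_zero
  congr 1
  apply mul_left_cancel₀ (mul_ne_zero hB hp)
  linear_combination h

theorem natCast_factorial_ne_zero (k : ℕ) : (k.factorial : ℤ_[p]) ≠ 0 :=
  Nat.cast_ne_zero.2 k.factorial_ne_zero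

theorem logRatio_factorial (l : ℕ) {N : ℕ} (hN : N < p) :
    LogRatio (p := p) ((l * p + N).factorial : ℕ) ((l * p).factorial * N.factorial : ℕ)
      (l * fieldHarmonic (ZMod p) N) := by
  induction N with
  | zero => simpa [fieldHarmonic] using LogRatio.refl _
  | succ N ih =>
    have hu : toZMod ((N + 1 : ℕ) : ℤ_[p]) ≠ 0 := by
      rw [map_natCast]
      exact natCast_ne_zero_of_lt (p := p) (by omega) hN
    obtain ⟨v, hv⟩ := isUnit_iff_toZMod_ne_zero.2 hu
    have hv1 : (v : ℤ_[p]) * (v⁻¹ : ℤ_[p]ˣ) = 1 := v.mul_inv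
    have h : LogRatio (p := p) ((l * p + N + 1 : ℕ)) ((N + 1 : ℕ)) (l * ((N : ZMod p) + 1)⁻¹) := by
      refine ⟨l * (v⁻¹ : ℤ_[p]ˣ), ?_, ?_⟩
      · have := congrArg toZMod hv1
        rw [hv, map_mul, map_natCast, map_one] at this
        rw [map_mul, map_natCast, eq_inv_of_mul_eq_one_right this]
        push_cast
        rfl
      · rw [← hv]
        push_cast at hv ⊢
        linear_combination -(l : ℤ_[p]) * p * hv1 - hv
    have h2 := h.mul (ih (by omega))
    rw [← Nat.cast_mul, ← Nat.cast_mul] at h2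
    rw [fieldHarmonic_succ, mul_add, add_comm (_ * _) (_ * _⁻¹), ← add_assoc,
      Nat.factorial_succ (l * p + N), Nat.factorial_succ N, mul_left_comm]
    exact h2

variable {n : ℕ}

theorem fieldHarmonic_two_mul (hpn : p = 2 * n + 1) (hp : 2 < p) :
    fieldHarmonic (ZMod p) (2 * n) = 0 := by
  have h := fieldHarmonic_sub (K := ZMod p) hpn le_rfl
  rw [Nat.sub_self] at h
  have h2 : ((2 : ℕ) : ZMod p) ≠ 0 := natCast_ne_zero_of_lt (p := p) (by omega) hp
  have h0 : fieldHarmonic (ZMod p) 0 = 0 := by simp [fieldHarmonic]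
  have : ((2 : ℕ) : ZMod p) * fieldHarmonic (ZMod p) (2 * n) = 0 := by
    push_cast
    linear_combination h0 - h
  exact (mul_eq_zero.1 this).resolve_left h2

theorem logRatio_factorial_two_mul (hpn : p = 2 * n + 1) (hp : 2 < p) {N : ℕ} (hN : N < p) :
    LogRatio (p := p) ((2 * p + N).factorial : ℕ) (2 * (p.factorial ^ 2 * N.factorial) : ℕ)
      (2 * fieldHarmonic (ZMod p) N) := by
  have h1 := logRatio_factorial 1 (N := p - 1) (p := p) (by omega)
  rw [show p - 1 = 2 * n by omega, fieldHarmonic_two_mul hpn hp, mul_zero, one_mul] at h1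
  have h2 := (LogRatio.refl ((2 * p : ℕ) : ℤ_[p])).mul h1
  have e : 2 * p * (p + 2 * n).factorial = (2 * p).factorial := by
    rw [show 2 * p = p + 2 * n + 1 by omega, Nat.factorial_succ]
  have e2 : 2 * p * (p.factorial * (2 * n).factorial) = 2 * p.factorial ^ 2 := by
    have : p.factorial = p * (2 * n).factorial := by
      rw [show p = 2 * n + 1 by omega, Nat.factorial_succ]
    rw [pow_two]
    nth_rw 2 [this]
    ring
  rw [← Nat.cast_mul, ← Nat.cast_mul, e, e2, add_zero] at h2
  have h3 := (logRatio_factorial 2 (p := p) hN).mul h2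
  rw [add_zero] at h3
  have h4 : LogRatio (p := p) ((2 * p + N).factorial * (2 * p).factorial)
      ((2 * (p.factorial ^ 2 * N.factorial) : ℕ) * (2 * p).factorial)
      (2 * fieldHarmonic (ZMod p) N) := by
    convert h3 using 1
    · push_cast
      ring
    · simp
  simpa using h4.of_mul (LogRatio.refl _) (natCast_factorial_ne_zero (2 * p))

theorem legendreCoeff_mul_factorial {m k : ℕ} (hk : k ≤ m) :
    legendreCoeff m k * ((m - k).factorial * k.factorial ^ 2) = (m + k).factorial := by
  have h1 := Nat.choose_mul_factorial_mul_factorial hk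
  have h2 := Nat.choose_mul_factorial_mul_factorial (Nat.le_add_left k m)
  rw [Nat.add_sub_cancel] at h2
  rw [legendreCoeff, ← h2, ← h1]
  ring

theorem logRatio_legendreCoeff (hpn : p = 2 * n + 1) (hp : 2 < p) {i : ℕ} (hi : i ≤ n) :
    LogRatio (p := p) (legendreCoeff (n + p) (p + i)) (2 * legendreCoeff n i)
      (2 * fieldHarmonic (ZMod p) (n + i) - 2 * fieldHarmonic (ZMod p) i) := by
  have h1 := logRatio_factorial_two_mul hpn hp (N := n + i) (by omega)
  have h2 := (logRatio_factorial 1 (p := p) (N := i) (by omega)).sq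
  have h3 := (LogRatio.refl (((n - i).factorial : ℕ) : ℤ_[p])).mul h2
  rw [zero_add, Nat.cast_one, one_mul, one_mul] at h3
  have e1 := legendreCoeff_mul_factorial (m := n + p) (k := p + i) (by omega)
  rw [show n + p + (p + i) = 2 * p + (n + i) by ring, show n + p - (p + i) = n - i by omega] at e1
  have e2 := legendreCoeff_mul_factorial hi
  refine LogRatio.of_mul ?_ h3 ?_
  · rw [← e1, ← e2] at h1
    convert h1 using 1
    · push_cast
      ring
    · push_cast
      ring
  · exact_mod_cast (by positivity : (n - i).factorial * (p.factorial * i.factorial) ^ 2 ≠ 0)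

theorem logRatio_centralBinom (hpn : p = 2 * n + 1) (hp : 2 < p) {i : ℕ} (hi : i ≤ n) :
    LogRatio (p := p) ((p + i).centralBinom) (2 * i.centralBinom)
      (2 * fieldHarmonic (ZMod p) (2 * i) - 2 * fieldHarmonic (ZMod p) i) := by
  have h1 := logRatio_factorial_two_mul hpn hp (N := 2 * i) (by omega)
  have h2 := (logRatio_factorial 1 (p := p) (N := i) (by omega)).sq
  rw [Nat.cast_one, one_mul, one_mul] at h2
  have e (k : ℕ) : k.centralBinom * k.factorial ^ 2 = (2 * k).factorial := by
    have := Nat.choose_mul_factorial_mul_factorial (show k ≤ 2 * k by omega)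
    rw [show 2 * k - k = k by omega] at this
    rw [← this, Nat.centralBinom]
    ring
  refine LogRatio.of_mul ?_ h2 ?_
  · rw [← mul_add, ← e, ← e] at h1
    convert h1 using 1
    · push_cast
      ring
    · push_cast
      ring
  · exact_mod_cast (by positivity : (p.factorial * i.factorial) ^ 2 ≠ 0)

theorem sq_dvd_legendreCoeff_sub (hpn : p = 2 * n + 1) {i : ℕ} (hi : i < p) :
    (p : ℤ) ^ 2 ∣ legendreCoeff (n + p) i - legendreCoeff n i := by
  induction i with
  | zero => simp [legendreCoeff]
  | succ k ih =>
    obtain ⟨c, hc⟩ := ih (by omega)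
    have h1 := succ_sq_mul_legendreCoeff_succ (n + p) k
    have h2 := succ_sq_mul_legendreCoeff_succ n k
    have hcop : IsCoprime ((p : ℤ) ^ 2) (((k + 1 : ℕ) : ℤ) ^ 2) := by
      apply IsCoprime.pow
      rw [Nat.isCoprime_iff_coprime]
      exact Nat.coprime_of_lt_prime (by omega) hi Fact.out
    refine hcop.dvd_of_dvd_mul_left ⟨2 * legendreCoeff (n + p) k +
      ((n : ℤ) * (n + 1) - k * (k + 1)) * c, ?_⟩
    have hpz : (p : ℤ) = 2 * n + 1 := by exact_mod_cast hpn
    push_cast at h1 h2 ⊢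
    linear_combination h1 - h2 + ((n : ℤ) * (n + 1) - k * (k + 1)) * hc -
      (p : ℤ) * legendreCoeff (n + p) k * hpz

/-- Expansion modulo `p²` of the sums `∑ c(k) C(m,k) C(m+k,k) y^k` at `m = n + p`. -/
theorem exists_sum_legendreCoeff_eq (hpn : p = 2 * n + 1) (hp : 2 < p) {c : ℕ → ℤ_[p]}
    {c₁ y : ℤ_[p]} {e : ℕ → ZMod p} {q : ZMod p}
    (hc : ∀ i ≤ n, LogRatio (c (p + i)) (c₁ * c i) (e i)) (hy : LogRatio (y ^ (p - 1)) 1 q) :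
    ∃ D E : ℤ_[p], toZMod D = ∑ i ∈ range (n + 1), toZMod (c i) * legendreCoeff n i * toZMod y ^ i *
        (2 * fieldHarmonic (ZMod p) (n + i) - 2 * fieldHarmonic (ZMod p) i + e i + q) ∧
      ∑ k ∈ range (n + p + 1), c k * legendreCoeff (n + p) k * y ^ k =
        ∑ k ∈ range (n + 1), c k * legendreCoeff n k * y ^ k +
        2 * c₁ * y * (∑ k ∈ range (n + 1), c k * legendreCoeff n k * y ^ k + p * D) +
        (p : ℤ_[p]) ^ 2 * E := by
  have low : ∃ E, ∑ k ∈ range p, c k * legendreCoeff (n + p) k * y ^ k =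
      ∑ k ∈ range (n + 1), c k * legendreCoeff n k * y ^ k + (p : ℤ_[p]) ^ 2 * E := by
    have hsub : ∑ k ∈ range (n + 1), c k * legendreCoeff n k * y ^ k =
        ∑ k ∈ range p, c k * legendreCoeff n k * y ^ k := by
      refine sum_subset (range_subset_range.2 (by omega)) fun k _ hk => ?_
      rw [mem_range, not_lt] at hk
      simp [legendreCoeff, Nat.choose_eq_zero_of_lt (show n < k by omega)]
    have hdvd : (p : ℤ_[p]) ^ 2 ∣ ∑ k ∈ range p, c k * legendreCoeff (n + p) k * y ^ k -
        ∑ k ∈ range p, c k * legendreCoeff n k * y ^ k := by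
      rw [← sum_sub_distrib]
      refine dvd_sum fun k hk => ?_
      obtain ⟨b, hb⟩ := sq_dvd_legendreCoeff_sub hpn (mem_range.1 hk)
      refine ⟨c k * y ^ k * b, ?_⟩
      have hb' := congrArg (Int.cast (R := ℤ_[p])) hb
      push_cast at hb'
      linear_combination c k * y ^ k * hb'
    obtain ⟨E, hE⟩ := hdvd
    exact ⟨E, by rw [hsub]; linear_combination hE⟩
  have high (i : ℕ) : ∃ δ : ℤ_[p], i ∈ range (n + 1) →
      toZMod δ = 2 * fieldHarmonic (ZMod p) (n + i) - 2 * fieldHarmonic (ZMod p) i + e i + q ∧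
      c (p + i) * legendreCoeff (n + p) (p + i) * y ^ (p + i) =
        2 * c₁ * y * (c i * legendreCoeff n i * y ^ i * (1 + p * δ)) := by
    by_cases hi : i ∈ range (n + 1)
    · have hi' : i ≤ n := by simpa [Nat.lt_succ_iff] using hi
      obtain ⟨δ, h1, h2⟩ := ((logRatio_legendreCoeff hpn hp hi').mul (hc i hi')).mul hy
      refine ⟨δ, fun _ => ⟨h1, ?_⟩⟩
      rw [show p + i = p - 1 + 1 + i by omega, pow_add, pow_succ,
        show p - 1 + 1 + i = p + i by omega]
      linear_combination y * y ^ i * h2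
    · exact ⟨0, fun h => absurd h hi⟩
  choose δ hδ using high
  obtain ⟨E, hE⟩ := low
  refine ⟨∑ i ∈ range (n + 1), c i * legendreCoeff n i * y ^ i * δ i, E, ?_, ?_⟩
  · rw [map_sum]
    refine sum_congr rfl fun i hi => ?_
    rw [← (hδ i hi).1]
    simp
  · rw [show n + p + 1 = p + (n + 1) by ring, sum_range_add, hE,
      sum_congr rfl fun i hi => (hδ i hi).2, ← mul_sum]
    simp only [mul_add, mul_one, sum_add_distrib, mul_sum]
    have : ∀ i, 2 * c₁ * y * (c i * legendreCoeff n i * y ^ i * (p * δ i)) =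
      2 * c₁ * y * (p * (c i * legendreCoeff n i * y ^ i * δ i)) := fun i => by ring
    simp only [this]
    ring

end Padic

section FermatQuotient

variable {p : ℕ} [Fact p.Prime]

open PadicInt (toZMod)

theorem exists_logRatio_pow_sub_one {y : ℤ_[p]} (hy : toZMod y ≠ 0) :
    ∃ q, LogRatio (y ^ (p - 1)) 1 q := by
  have h : toZMod (y ^ (p - 1) - 1) = 0 := by
    rw [map_sub, map_pow, ZMod.pow_card_sub_one_eq_one hy, map_one, sub_self]
  obtain ⟨δ, hδ⟩ := toZMod_eq_zero_iff_dvd.1 h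
  exact ⟨toZMod δ, δ, rfl, by linear_combination hδ⟩

open Classical in
/-- The reduction modulo `p` of the Fermat quotient `(y ^ (p - 1) - 1) / p` of a unit `y`. -/
noncomputable def fermatQuot (y : ℤ_[p]) : ZMod p :=
  if h : toZMod y ≠ 0 then (exists_logRatio_pow_sub_one h).choose else 0

theorem logRatio_fermatQuot {y : ℤ_[p]} (hy : toZMod y ≠ 0) :
    LogRatio (y ^ (p - 1)) 1 (fermatQuot y) := by
  rw [fermatQuot, dif_pos hy]
  exact (exists_logRatio_pow_sub_one hy).choose_spec

theorem fermatQuot_eq {y : ℤ_[p]} {q : ZMod p} (hy : toZMod y ≠ 0)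
    (h : LogRatio (y ^ (p - 1)) 1 q) : fermatQuot y = q :=
  (logRatio_fermatQuot hy).unique h one_ne_zero

theorem fermatQuot_mul {y z : ℤ_[p]} (hy : toZMod y ≠ 0) (hz : toZMod z ≠ 0) :
    fermatQuot (y * z) = fermatQuot y + fermatQuot z := by
  apply fermatQuot_eq (by simp [hy, hz])
  rw [mul_pow]
  simpa using (logRatio_fermatQuot hy).mul (logRatio_fermatQuot hz)

theorem fermatQuot_one : fermatQuot (1 : ℤ_[p]) = 0 := by
  apply fermatQuot_eq (by simp)
  simpa using LogRatio.refl (1 : ℤ_[p])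

theorem fermatQuot_neg (hp : 2 < p) {y : ℤ_[p]} (hy : toZMod y ≠ 0) :
    fermatQuot (-y) = fermatQuot y := by
  apply fermatQuot_eq (by simpa using hy)
  rw [((Fact.out : p.Prime).even_sub_one (by omega)).neg_pow]
  exact logRatio_fermatQuot hy

theorem fermatQuot_of_mul_eq_one {y z : ℤ_[p]} (h : y * z = 1) :
    fermatQuot z = -fermatQuot y := by
  have h1 : toZMod y * toZMod z = 1 := by rw [← map_mul, h, map_one]
  rw [eq_neg_iff_add_eq_zero, ← fermatQuot_mul (right_ne_zero_of_mul_eq_one h1)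
    (left_ne_zero_of_mul_eq_one h1), mul_comm, h, fermatQuot_one]

theorem fieldHarmonic_eq_neg_two_mul_fermatQuot {n : ℕ} (hpn : p = 2 * n + 1) (hp : 2 < p) :
    fieldHarmonic (ZMod p) n = -2 * fermatQuot (2 : ℤ_[p]) := by
  have h2 : (2 : ZMod p) ≠ 0 := by
    exact_mod_cast natCast_ne_zero_of_lt (K := ZMod p) (p := p) (by omega) hp
  obtain ⟨δ, hδ, h⟩ := logRatio_fermatQuot (p := p) (y := 2) (by rwa [map_ofNat])
  have hp0 : (p : ℤ_[p]) ≠ 0 := Nat.cast_ne_zero.2 (Fact.out : p.Prime).ne_zero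
  have hinv (j : ℕ) : ∃ v : ℤ_[p], j ∈ range (2 * n) → (j + 1 : ℤ_[p]) * v = 1 := by
    by_cases hj : j ∈ range (2 * n)
    · have hu : toZMod ((j + 1 : ℕ) : ℤ_[p]) ≠ 0 := by
        rw [map_natCast]
        have := mem_range.1 hj
        exact natCast_ne_zero_of_lt (p := p) (by omega) (by omega)
      obtain ⟨v, hv⟩ := isUnit_iff_toZMod_ne_zero.2 hu
      exact ⟨(v⁻¹ : ℤ_[p]ˣ), fun _ => by rw [← Nat.cast_succ, ← hv, v.mul_inv]⟩
    · exact ⟨0, fun h => absurd h hj⟩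
  choose v hv using hinv
  have hsum : 2 * δ = ∑ j ∈ range (2 * n), ((p - 1).choose j : ℤ_[p]) * v j := by
    apply mul_left_cancel₀ hp0
    have e : (2 : ℤ_[p]) ^ p = ∑ k ∈ range (p + 1), (p.choose k : ℤ_[p]) := by
      exact_mod_cast (Nat.sum_range_choose p).symm
    rw [sum_range_succ, Nat.choose_self] at e
    rw [sum_congr (congrArg range hpn) fun _ _ => rfl, sum_range_succ', Nat.choose_zero_right] at e
    have e3 : (2 : ℤ_[p]) ^ p = 2 ^ (p - 1) * 2 := by
      rw [← pow_succ, show p - 1 + 1 = p by omega]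
    have e2 : ∑ j ∈ range (2 * n), (p.choose (j + 1) : ℤ_[p]) =
        p * ∑ j ∈ range (2 * n), ((p - 1).choose j : ℤ_[p]) * v j := by
      rw [mul_sum]
      refine sum_congr rfl fun j hj => ?_
      have h1 := congrArg (Nat.cast (R := ℤ_[p])) (Nat.add_one_mul_choose_eq (p - 1) j)
      rw [show p - 1 + 1 = p by omega] at h1
      push_cast at h1
      linear_combination -v j * h1 - (p.choose (j + 1) : ℤ_[p]) * hv j hj
    rw [e2, e3, h] at e
    push_cast at e
    linear_combination e
  have hsum' := congrArg toZMod hsum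
  rw [map_mul, hδ, map_sum] at hsum'
  have e : ∑ j ∈ range (2 * n), toZMod (((p - 1).choose j : ℤ_[p]) * v j) =
      fieldHarmonic (ZMod p) (2 * n) - fieldHarmonic (ZMod p) n := by
    rw [← sum_neg_one_pow_mul_inv h2]
    refine sum_congr rfl fun j hj => ?_
    have hj' := mem_range.1 hj
    have := congrArg toZMod (hv j hj)
    rw [map_mul, map_one, map_add, map_natCast, map_one] at this
    rw [map_mul, map_natCast, choose_prime_sub_one (by omega), eq_inv_of_mul_eq_one_right this]
  rw [e, fieldHarmonic_two_mul hpn hp, show toZMod (2 : ℤ_[p]) = 2 from map_ofNat _ 2] at hsum'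
  linear_combination hsum'

end FermatQuotient

section PadicDeriv

variable {p : ℕ} [Fact p.Prime] {n : ℕ}

open PadicInt (toZMod)

/-- The derivative sum `choosePowDeriv` at a `p`-adic unit, whose logarithm is its Fermat
quotient. -/
noncomputable def padicDeriv (n r : ℕ) (y : ℤ_[p]) : ZMod p :=
  choosePowDeriv n r (toZMod y) (fermatQuot y)

theorem padicDeriv_of_mul_eq_one (r : ℕ) {y z : ℤ_[p]} (h : y * z = 1) :
    padicDeriv n r z = -(toZMod z ^ n * padicDeriv n r y) := by
  have h1 : toZMod y * toZMod z = 1 := by rw [← map_mul, h, map_one]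
  rw [padicDeriv, fermatQuot_of_mul_eq_one h, eq_inv_of_mul_eq_one_right h1,
    choosePowDeriv_inv _ _ _ (left_ne_zero_of_mul_eq_one h1), padicDeriv]

theorem toZMod_aeval_shiftedLegendre (hpn : p = 2 * n + 1) (s : ℤ_[p]) :
    toZMod (Polynomial.aeval s (Polynomial.shiftedLegendre n)) =
      choosePowSum n 2 (toZMod s) := by
  rw [← aeval_shiftedLegendre_eq_choosePowSum hpn, aeval_shiftedLegendre, aeval_shiftedLegendre,
    map_sum]
  simp

theorem toZMod_aeval_clausenPoly (hpn : p = 2 * n + 1) (u : ℤ_[p]) :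
    toZMod (Polynomial.aeval u (clausenPoly n)) = choosePowSum n 3 (-4 * toZMod u) := by
  rw [← aeval_clausenPoly_eq_choosePowSum hpn, aeval_clausenPoly, aeval_clausenPoly, map_sum]
  simp

open Polynomial in
theorem exists_aeval_shiftedLegendre_eq (hpn : p = 2 * n + 1) (hp : 2 < p) {s : ℤ_[p]}
    (hs : toZMod s ≠ 0) : ∃ D E : ℤ_[p], toZMod D = padicDeriv n 2 s ∧
      aeval s (shiftedLegendre (n + p)) = (1 - 2 * s) * aeval s (shiftedLegendre n) -
        2 * s * p * D + (p : ℤ_[p]) ^ 2 * E := by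
  have hs' : toZMod (-s) ≠ 0 := by simpa using hs
  obtain ⟨D, E, hD, hE⟩ := exists_sum_legendreCoeff_eq hpn hp (c := fun _ => 1) (c₁ := 1)
    (e := fun _ => 0) (fun i _ => by simpa using LogRatio.refl (1 : ℤ_[p]))
    (logRatio_fermatQuot hs')
  refine ⟨D, E, ?_, ?_⟩
  · rw [hD, padicDeriv, choosePowDeriv]
    refine sum_congr rfl fun i hi => ?_
    have hi : i ≤ n := by simpa [Nat.lt_succ_iff] using hi
    rw [fermatQuot_neg hp hs, fieldHarmonic_add_eq_sub hpn hi,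
      legendreCoeff_eq_neg_one_pow_mul hpn hi, map_neg, neg_pow (toZMod s), map_one]
    have : ((-1 : ZMod p)) ^ i * (-1) ^ i = 1 := by rw [← mul_pow]; simp
    push_cast
    linear_combination (n.choose i : ZMod p) ^ 2 * toZMod s ^ i * (2 *
      (fieldHarmonic (ZMod p) (n - i) - fieldHarmonic (ZMod p) i) + fermatQuot s) * this
  · simp only [one_mul] at hE
    rw [aeval_shiftedLegendre, aeval_shiftedLegendre, hE]
    ring

open Polynomial in
theorem exists_aeval_clausenPoly_eq (hpn : p = 2 * n + 1) (hp : 2 < p) {u : ℤ_[p]}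
    (hu : toZMod u ≠ 0) : ∃ D E : ℤ_[p], toZMod D = padicDeriv n 3 (-(4 * u)) ∧
      aeval u (clausenPoly (n + p)) = (1 - 4 * u) * aeval u (clausenPoly n) -
        4 * u * p * D + (p : ℤ_[p]) ^ 2 * E := by
  have hu' : toZMod (-u) ≠ 0 := by simpa using hu
  have h2 : toZMod (2 : ℤ_[p]) ≠ 0 := by
    rw [map_ofNat]
    exact_mod_cast natCast_ne_zero_of_lt (K := ZMod p) (p := p) (by omega) hp
  have h4 : toZMod (2 * 2 : ℤ_[p]) ≠ 0 := by
    rw [map_mul]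
    exact mul_ne_zero h2 h2
  obtain ⟨D, E, hD, hE⟩ := exists_sum_legendreCoeff_eq hpn hp
    (c := fun k => (k.centralBinom : ℤ_[p])) (c₁ := 2)
    (fun i hi => logRatio_centralBinom hpn hp hi) (logRatio_fermatQuot hu')
  refine ⟨D, E, ?_, ?_⟩
  · have e4 : (4 : ℤ_[p]) = 2 * 2 := by norm_num
    have hfq : fermatQuot (-(4 * u)) = fermatQuot u - fieldHarmonic (ZMod p) n := by
      rw [fieldHarmonic_eq_neg_two_mul_fermatQuot hpn hp, e4,
        fermatQuot_neg hp (by rw [map_mul]; exact mul_ne_zero h4 hu), fermatQuot_mul h4 hu,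
        fermatQuot_mul h2 h2]
      ring
    rw [hD, padicDeriv, choosePowDeriv, hfq]
    refine sum_congr rfl fun i hi => ?_
    have hi : i ≤ n := by simpa [Nat.lt_succ_iff] using hi
    have hs := fieldHarmonic_sub (K := ZMod p) hpn hi
    rw [fermatQuot_neg hp hu, fieldHarmonic_add_eq_sub hpn hi,
      legendreCoeff_eq_neg_one_pow_mul hpn hi, map_neg, neg_pow (toZMod u), map_natCast,
      centralBinom_eq_neg_four_pow_mul hpn hi, map_neg, map_mul, map_ofNat,
      show -((4 : ZMod p) * toZMod u) = -4 * toZMod u by ring, mul_pow]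
    have : ((-1 : ZMod p)) ^ i * (-1) ^ i = 1 := by rw [← mul_pow]; simp
    push_cast
    linear_combination (-4) ^ i * (n.choose i : ZMod p) ^ 3 * toZMod u ^ i *
      (2 * fieldHarmonic (ZMod p) (n - i) - 2 * fieldHarmonic (ZMod p) i +
        (2 * fieldHarmonic (ZMod p) (2 * i) - 2 * fieldHarmonic (ZMod p) i) + fermatQuot u) *
        this - (-4) ^ i * (n.choose i : ZMod p) ^ 3 * toZMod u ^ i * hs
  · rw [aeval_clausenPoly, aeval_clausenPoly, hE]
    ring

end PadicDeriv

section Congruences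

variable {p : ℕ} [Fact p.Prime] {n : ℕ}

open PadicInt (toZMod)

theorem one_sub_mul_padicDeriv_one_sub (hpn : p = 2 * n + 1) (hp : 2 < p) {s : ℤ_[p]}
    (hs : toZMod s ≠ 0) (hs' : toZMod (1 - s) ≠ 0) :
    (1 - toZMod s) * padicDeriv n 2 (1 - s) = -((-1) ^ n * (toZMod s * padicDeriv n 2 s)) := by
  obtain ⟨D, E, hD, hE⟩ := exists_aeval_shiftedLegendre_eq hpn hp hs
  obtain ⟨D', E', hD', hE'⟩ := exists_aeval_shiftedLegendre_eq hpn hp hs'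
  have hp0 : (p : ℤ_[p]) ≠ 0 := Nat.cast_ne_zero.2 (Fact.out : p.Prime).ne_zero
  have h2 : (2 : ZMod p) ≠ 0 := by
    exact_mod_cast natCast_ne_zero_of_lt (K := ZMod p) (p := p) (by omega) hp
  have hodd : (-1 : ℤ_[p]) ^ p = -1 := Odd.neg_one_pow ⟨n, hpn⟩
  rw [Polynomial.shiftedLegendre_eval_symm, Polynomial.shiftedLegendre_eval_symm n, sub_sub_cancel,
    hE, pow_add, hodd] at hE'
  have h : -(-1) ^ n * (-2 * s * D + p * E) = -2 * (1 - s) * D' + p * E' := by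
    apply mul_left_cancel₀ hp0
    linear_combination hE'
  replace h := congrArg toZMod h
  simp only [map_mul, map_add, map_neg, map_sub, map_pow, map_one, map_ofNat, map_natCast, hD, hD',
    CharP.cast_eq_zero, zero_mul, add_zero] at h
  apply mul_left_cancel₀ h2
  linear_combination h

theorem mul_padicDeriv_three (hpn : p = 2 * n + 1) (hp : 2 < p) {s : ℤ_[p]}
    (hs : toZMod s ≠ 0) (hs' : toZMod (1 - s) ≠ 0) :
    toZMod s * (1 - toZMod s) * padicDeriv n 3 (-(4 * (s * (1 - s)))) =
      (1 - 2 * toZMod s) * (choosePowSum n 2 (toZMod s) * (toZMod s * padicDeriv n 2 s)) := by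
  obtain ⟨D, E, hD, hE⟩ := exists_aeval_shiftedLegendre_eq hpn hp hs
  obtain ⟨D', E', hD', hE'⟩ := exists_aeval_clausenPoly_eq hpn hp (u := s * (1 - s))
    (by rw [map_mul]; exact mul_ne_zero hs hs')
  have hp0 : (p : ℤ_[p]) ≠ 0 := Nat.cast_ne_zero.2 (Fact.out : p.Prime).ne_zero
  have h2 : (2 : ZMod p) ≠ 0 := by
    exact_mod_cast natCast_ne_zero_of_lt (K := ZMod p) (p := p) (by omega) hp
  rw [← aeval_shiftedLegendre_sq, ← aeval_shiftedLegendre_sq, hE] at hE'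
  rw [← toZMod_aeval_shiftedLegendre hpn, ← hD, ← hD']
  set L := Polynomial.aeval s (Polynomial.shiftedLegendre n)
  have h : 2 * 2 * (s * (1 - s) * D') = 2 * 2 * ((1 - 2 * s) * (L * (s * D))) +
      p * (E' - (-2 * s * D + p * E) ^ 2 - 2 * (1 - 2 * s) * L * E) := by
    apply mul_left_cancel₀ hp0
    linear_combination hE'
  replace h := congrArg toZMod h
  rw [map_add, map_mul _ (p : ℤ_[p]), map_natCast, CharP.cast_eq_zero, zero_mul, add_zero] at h
  simp only [map_mul, map_sub, map_one, map_ofNat] at h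
  exact mul_left_cancel₀ (mul_ne_zero h2 h2) h

theorem padicDeriv_three_eq_zero (hpn : p = 2 * n + 1) (hp : 2 < p) {s : ℤ_[p]}
    (hs : toZMod s ≠ 0) (hs' : toZMod (1 - s) ≠ 0)
    (h : choosePowSum n 2 (toZMod s) * (toZMod s * padicDeriv n 2 s) = 0) :
    padicDeriv n 3 (-(4 * (s * (1 - s)))) = 0 := by
  have := mul_padicDeriv_three hpn hp hs hs'
  rw [h, mul_zero] at this
  rw [map_sub, map_one] at hs'
  exact (mul_eq_zero.1 this).resolve_left (mul_ne_zero hs hs')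

open Polynomial in
/-- Up to the factor `1 - 4u`, the values of `clausenPoly` are squares. -/
theorem exists_aeval_clausenPoly_eq_sq {R : Type*} [CommRing R] [IsDomain R] (m : ℕ) (u : R) :
    ∃ a, aeval u (clausenPoly m) = a ^ 2 ∨ aeval u (clausenPoly m) = a ^ 2 * (1 - 4 * u) := by
  let ω : QuadraticAlgebra R (-u) 1 := ⟨0, 1⟩
  have h := aeval_shiftedLegendre_sq m ω
  have hω : ω * (1 - ω) = algebraMap R _ u := by
    ext <;> simp [ω, QuadraticAlgebra.re_one, QuadraticAlgebra.im_one]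
  rw [hω, aeval_algebraMap_apply] at h
  set F := aeval ω (shiftedLegendre m)
  have hre := congrArg QuadraticAlgebra.re h
  have him := congrArg QuadraticAlgebra.im h
  simp [pow_two] at hre him
  have him' : F.im * (2 * F.re + F.im) = 0 := by linear_combination him
  refine ⟨F.re, ?_⟩
  rcases mul_eq_zero.1 him' with h0 | h0
  · left
    rw [← hre, h0]
    ring
  · right
    rw [← hre, eq_neg_of_add_eq_zero_right h0]
    ring

open Polynomial in
theorem sq_dvd_aeval_clausenPoly {u : ℤ_[p]} (hu : toZMod (1 - 4 * u) ≠ 0) {m : ℕ}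
    (h : (p : ℤ_[p]) ∣ aeval u (clausenPoly m)) :
    (p : ℤ_[p]) ^ 2 ∣ aeval u (clausenPoly m) := by
  have hprime : Prime (p : ℤ_[p]) := PadicInt.prime_p
  obtain ⟨a, ha | ha⟩ := exists_aeval_clausenPoly_eq_sq m u
  · rw [ha] at h ⊢
    exact pow_dvd_pow_of_dvd (hprime.dvd_of_dvd_pow h) 2
  · rw [ha] at h ⊢
    rw [Ne, toZMod_eq_zero_iff_dvd] at hu
    exact (pow_dvd_pow_of_dvd (hprime.dvd_of_dvd_pow ((hprime.dvd_or_dvd h).resolve_right hu))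
      2).mul_right _

theorem padicDeriv_three_eq_zero_of_choosePowSum_eq_zero (hpn : p = 2 * n + 1) (hp : 2 < p)
    {u : ℤ_[p]} (hu : toZMod u ≠ 0) (hu' : toZMod (1 - 4 * u) ≠ 0)
    (h : choosePowSum n 3 (-4 * toZMod u) = 0) : padicDeriv n 3 (-(4 * u)) = 0 := by
  obtain ⟨D, E, hD, hE⟩ := exists_aeval_clausenPoly_eq hpn hp hu
  rw [← toZMod_aeval_clausenPoly hpn, toZMod_eq_zero_iff_dvd] at h
  have h1 := sq_dvd_aeval_clausenPoly hu' h
  have h3 := sq_dvd_aeval_clausenPoly hu' (m := n + p) (by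
    rw [hE, pow_two]
    exact ((h.mul_left _).sub (Dvd.intro_left (4 * u) rfl |>.mul_right _)).add
      (dvd_mul_of_dvd_left (dvd_mul_right _ _) _))
  obtain ⟨x, hx⟩ := h1
  obtain ⟨y, hy⟩ := h3
  have hp0 : (p : ℤ_[p]) ≠ 0 := Nat.cast_ne_zero.2 (Fact.out : p.Prime).ne_zero
  have h2 : (2 : ZMod p) ≠ 0 := by
    exact_mod_cast natCast_ne_zero_of_lt (K := ZMod p) (p := p) (by omega) hp
  have h4 : 2 * 2 * (u * D) = p * ((1 - 4 * u) * x + E - y) := by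
    apply mul_left_cancel₀ hp0
    linear_combination hE - hy + (1 - 4 * u) * hx
  replace h4 := congrArg toZMod h4
  rw [map_mul _ (p : ℤ_[p]), map_natCast, CharP.cast_eq_zero, zero_mul] at h4
  simp only [map_mul, map_ofNat, hD] at h4
  exact (mul_eq_zero.1 ((mul_eq_zero.1 h4).resolve_left (mul_ne_zero h2 h2))).resolve_left hu

end Congruences

section QuadraticRoots

variable {p : ℕ} [Fact p.Prime] {n : ℕ}

open PadicInt (toZMod)

open Polynomial in
theorem exists_sq_eq_of_isSquare_toZMod (hp : 2 < p) {d : ℤ_[p]} (hd : toZMod d ≠ 0)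
    (h : IsSquare (toZMod d)) : ∃ z : ℤ_[p], z ^ 2 = d := by
  obtain ⟨a, ha⟩ := h
  obtain ⟨b, rfl⟩ := ZMod.ringHom_surjective toZMod a
  have h2 : (2 : ZMod p) ≠ 0 := by
    exact_mod_cast natCast_ne_zero_of_lt (K := ZMod p) (p := p) (by omega) hp
  have hb : toZMod (2 * b) ≠ 0 := by
    rw [map_mul, map_ofNat]
    refine mul_ne_zero h2 fun hb => hd ?_
    rw [ha, hb, mul_zero]
  have hnorm : ‖(X ^ 2 - C d : ℤ_[p][X]).aeval b‖ <
      ‖(derivative (X ^ 2 - C d : ℤ_[p][X])).aeval b‖ ^ 2 := by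
    have e : (derivative (X ^ 2 - C d : ℤ_[p][X])).aeval b = 2 * b := by
      simp [two_mul, add_mul]
    rw [e, PadicInt.isUnit_iff.1 (isUnit_iff_toZMod_ne_zero.2 hb), one_pow,
      PadicInt.norm_lt_one_iff_dvd, ← toZMod_eq_zero_iff_dvd]
    simp [ha, pow_two]
  obtain ⟨z, hz, -⟩ := hensels_lemma hnorm
  exact ⟨z, by simpa [sub_eq_zero] using hz⟩

/-- A quadratic `t (1 - t) = c` which is separable modulo `p` either has a `p`-adic root, or has
roots in the algebraic closure of the residue field which are exchanged by Frobenius. -/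
theorem exists_mul_one_sub_eq_or (hpn : p = 2 * n + 1) (hp : 2 < p) {c : ℤ_[p]}
    (hc : toZMod (1 - 4 * c) ≠ 0) :
    (∃ t : ℤ_[p], t * (1 - t) = c) ∨ ∃ t : AlgebraicClosure (ZMod p),
      t * (1 - t) = algebraMap (ZMod p) _ (toZMod c) ∧ t ^ p = 1 - t ∧ t ≠ 1 - t := by
  have h2 : (2 : ZMod p) ≠ 0 := by
    exact_mod_cast natCast_ne_zero_of_lt (K := ZMod p) (p := p) (by omega) hp
  by_cases hsq : IsSquare (toZMod (1 - 4 * c))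
  · left
    obtain ⟨z, hz⟩ := exists_sq_eq_of_isSquare_toZMod hp hc hsq
    obtain ⟨v, hv⟩ := (isUnit_iff_toZMod_ne_zero (x := (2 : ℤ_[p]))).2 (by rwa [map_ofNat])
    have hv1 : (v : ℤ_[p]) * (v⁻¹ : ℤ_[p]ˣ) = 1 := v.mul_inv
    rw [hv] at hv1
    set w : ℤ_[p] := ↑v⁻¹
    exact ⟨w * (1 + z), by linear_combination -w ^ 2 * hz + ((2 * w + 1) * c - w * (1 + z)) * hv1⟩
  · right
    have := charP_of_injective_algebraMap
      (algebraMap (ZMod p) (AlgebraicClosure (ZMod p))).injective p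
    have h2' : (2 : AlgebraicClosure (ZMod p)) ≠ 0 := by
      exact_mod_cast natCast_ne_zero_of_lt (K := AlgebraicClosure (ZMod p)) (p := p) (by omega) hp
    obtain ⟨z, hz⟩ := IsAlgClosed.exists_pow_nat_eq
      (algebraMap (ZMod p) (AlgebraicClosure (ZMod p)) (toZMod (1 - 4 * c))) two_pos
    have hzp : z ^ p = -z := by
      have h := (ZMod.pow_div_two_eq_neg_one_or_one p hc).resolve_left
        (mt (ZMod.euler_criterion p hc).2 hsq)
      rw [show p / 2 = n by omega] at h
      have h' := congrArg (algebraMap (ZMod p) (AlgebraicClosure (ZMod p))) h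
      rw [map_pow, ← hz, ← pow_mul, map_neg, map_one] at h'
      rw [congrArg (z ^ ·) hpn, pow_succ, h', neg_one_mul]
    have hz0 : z ≠ 0 := by
      rintro rfl
      rw [zero_pow two_ne_zero, eq_comm, map_eq_zero] at hz
      exact hc hz
    have hz' : z ^ 2 = 1 - 4 * algebraMap (ZMod p) (AlgebraicClosure (ZMod p)) (toZMod c) := by
      rw [hz, map_sub, map_mul, map_one, map_ofNat, map_sub, map_mul, map_one, map_ofNat]
    have h2p : (2 : AlgebraicClosure (ZMod p)) ^ p = 2 := by
      have := map_ofNat (frobenius (AlgebraicClosure (ZMod p)) p) 2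
      rwa [frobenius_def] at this
    refine ⟨(1 + z) / 2, ?_, ?_, ?_⟩
    · field_simp
      linear_combination -hz'
    · rw [div_pow, add_pow_char, one_pow, hzp, h2p]
      field_simp
      ring
    · intro h
      field_simp at h
      have : 2 * z = 0 := by linear_combination h
      exact hz0 ((mul_eq_zero.1 this).resolve_left h2')

end QuadraticRoots

section SpecialValues

variable {p : ℕ} [Fact p.Prime] {n : ℕ}

open PadicInt (toZMod)

theorem toZMod_three_ne_zero (hp : 3 < p) : toZMod (3 : ℤ_[p]) ≠ 0 := by
  rw [map_ofNat]
  exact_mod_cast natCast_ne_zero_of_lt (K := ZMod p) (p := p) (by omega) hp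

theorem padicDeriv_three_one_eq_zero (hp : 2 < p) : padicDeriv n 3 (1 : ℤ_[p]) = 0 := by
  have h2 : (2 : ZMod p) ≠ 0 := by
    exact_mod_cast natCast_ne_zero_of_lt (K := ZMod p) (p := p) (by omega) hp
  have h := padicDeriv_of_mul_eq_one (n := n) 3 (one_mul (1 : ℤ_[p]))
  rw [map_one, one_pow, one_mul] at h
  exact (mul_eq_zero.1 (by linear_combination h : 2 * padicDeriv n 3 (1 : ℤ_[p]) = 0)).resolve_left
    h2

theorem padicDeriv_three_eight_eq_zero (hpn : p = 2 * n + 1) (hp : 2 < p) :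
    padicDeriv n 3 (8 : ℤ_[p]) = 0 := by
  have h2 : (2 : ZMod p) ≠ 0 := by
    exact_mod_cast natCast_ne_zero_of_lt (K := ZMod p) (p := p) (by omega) hp
  have h := padicDeriv_three_eq_zero hpn hp (s := -1) (by simp) (by
    rwa [sub_neg_eq_add, one_add_one_eq_two, map_ofNat]) ?_
  · convert h using 2
    ring
  · have hD := padicDeriv_of_mul_eq_one (n := n) 2 (show (-1 : ℤ_[p]) * -1 = 1 by norm_num)
    have hS := choosePowSum_inv n 2 (y := (-1 : ZMod p)) (by simp)
    rw [inv_neg_one] at hS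
    rw [map_neg, map_one] at hD ⊢
    set S := choosePowSum n 2 (-1 : ZMod p)
    set D := padicDeriv n 2 (-1 : ℤ_[p])
    have h1 : ((-1 : ZMod p)) ^ n * (-1) ^ n = 1 := by rw [← mul_pow]; simp
    apply (mul_eq_zero.1 (_ : (2 : ZMod p) * _ = 0)).resolve_left h2
    linear_combination -S * hD + (-1) ^ n * D * hS + S * D * h1

theorem padicDeriv_three_neg_four_eq_zero (hpn : p = 2 * n + 1) (hp : 3 < p) :
    padicDeriv n 3 (-4 : ℤ_[p]) = 0 := by
  have hc : toZMod (1 - 4 * 1 : ℤ_[p]) ≠ 0 := by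
    rw [show (1 - 4 * 1 : ℤ_[p]) = -3 by norm_num, map_neg]
    exact neg_ne_zero.2 (toZMod_three_ne_zero hp)
  rcases exists_mul_one_sub_eq_or hpn (by omega) hc with ⟨t, ht⟩ | ⟨t, ht, htp, hne⟩
  · have ht' : toZMod t * (1 - toZMod t) = 1 := by
      rw [← map_one toZMod, ← map_sub, ← map_mul, ht]
    have h0 : toZMod t ≠ 0 := left_ne_zero_of_mul_eq_one ht'
    have h1 : toZMod (1 - t) ≠ 0 := by
      rw [map_sub, map_one]
      exact right_ne_zero_of_mul_eq_one ht'
    have h := padicDeriv_three_eq_zero hpn (by omega) h0 h1 ?_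
    · rwa [ht, mul_one] at h
    · by_contra hne
      have hS := choosePowSum_one_sub hpn (toZMod t)
      rw [eq_inv_of_mul_eq_one_right ht', choosePowSum_inv _ _ h0,
        ← eq_inv_of_mul_eq_one_right ht'] at hS
      replace hS := mul_right_cancel₀ (left_ne_zero_of_mul hne) hS
      have hD := one_sub_mul_padicDeriv_one_sub hpn (by omega) h0 h1
      rw [padicDeriv_of_mul_eq_one 2 ht, map_sub, map_one, hS] at hD
      have h2 : 1 - toZMod t = toZMod t := by
        apply mul_right_cancel₀ (mul_ne_zero
          (pow_ne_zero n (neg_ne_zero.2 (one_ne_zero (α := ZMod p))))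
          (right_ne_zero_of_mul (right_ne_zero_of_mul hne)))
        linear_combination -hD
      apply hc
      simp only [map_sub, map_mul, map_one, map_ofNat]
      linear_combination 4 * ht' + (1 - 2 * toZMod t) * h2
  · have := charP_of_injective_algebraMap
      (algebraMap (ZMod p) (AlgebraicClosure (ZMod p))).injective p
    rw [map_one, map_one] at ht
    have h := choosePowSum_two_sq hpn t
    rw [choosePowSum_eq_zero_of_pow_eq hpn ht htp hne, ht] at h
    have h' := padicDeriv_three_eq_zero_of_choosePowSum_eq_zero hpn (by omega) (u := 1)
      (by simp) hc ?_
    · rwa [mul_one] at h'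
    · apply (algebraMap (ZMod p) (AlgebraicClosure (ZMod p))).injective
      rw [map_choosePowSum, map_zero, map_mul, map_neg, map_ofNat, map_one, map_one, ← h]
      simp

theorem choosePowSum_pow_four_eq_zero_of_pow_eq {K : Type*} [Field K] [CharP K p]
    (hpn : p = 2 * n + 1) (h2 : (2 : K) ≠ 0)
    {t : K} (ht : t * (1 - t) = 2) (htp : t ^ p = 1 - t) (hne : t ≠ 1 - t) :
    choosePowSum n 2 (t ^ 4) = 0 := by
  obtain ⟨r, hr⟩ : ∃ r, r = 1 - t := ⟨_, rfl⟩
  rw [← hr] at ht htp hne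
  have ht0 : t ≠ 0 := left_ne_zero_of_mul (ht ▸ h2)
  have hr0 : r ≠ 0 := right_ne_zero_of_mul (ht ▸ h2)
  have hrp : r ^ p = t := by
    rw [hr, sub_pow_char, one_pow, htp, hr, sub_sub_cancel]
  have hsum : t ^ 4 + r ^ 4 = 1 := by
    have h1 : t ^ 2 + r ^ 2 = -3 := by linear_combination (r + t + 1) * hr - 2 * ht
    linear_combination (t ^ 2 + r ^ 2 - 3) * h1 - 2 * (t * r + 2) * ht
  have hsum' : (1 : K) - t ^ 4 = r ^ 4 := by linear_combination -hsum
  have hS := choosePowSum_one_sub hpn (t ^ 4)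
  rw [hsum'] at hS
  have hA := choosePowSum_inv n 2 (pow_ne_zero 4 ht0)
  have hB := choosePowSum_inv n 2 (pow_ne_zero 4 hr0)
  have hA2 := choosePowSum_two_sq hpn (t ^ 4)⁻¹
  have hB2 := choosePowSum_two_sq hpn (r ^ 4)⁻¹
  have hy1 : -4 * ((t ^ 4)⁻¹ * (1 - (t ^ 4)⁻¹)) * t ^ 8 = 4 * r ^ 4 := by
    field_simp
    linear_combination -4 * hsum
  have hz1 : -4 * ((r ^ 4)⁻¹ * (1 - (r ^ 4)⁻¹)) * r ^ 8 = 4 * t ^ 4 := by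
    field_simp
    linear_combination -4 * hsum
  set y : K := -4 * ((t ^ 4)⁻¹ * (1 - (t ^ 4)⁻¹))
  set z : K := -4 * ((r ^ 4)⁻¹ * (1 - (r ^ 4)⁻¹))
  clear_value y z
  have hyz : y * z = 1 := by
    have htr : t ^ 4 * r ^ 4 = 16 := by
      rw [← mul_pow, ht]
      norm_num
    apply mul_right_cancel₀ (mul_ne_zero (pow_ne_zero 8 ht0) (pow_ne_zero 8 hr0))
    linear_combination z * r ^ 8 * hy1 + 4 * r ^ 4 * hz1 - t ^ 4 * r ^ 4 * htr
  have hy := choosePowSum_inv n 3 (left_ne_zero_of_mul_eq_one hyz)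
  rw [← eq_inv_of_mul_eq_one_right hyz, ← hA2, ← hB2, hA, hB, hS] at hy
  set Y := choosePowSum n 2 (t ^ 4)
  by_contra hY
  have hneg : ((-1 : K) ^ n) ^ 2 = 1 := by
    rw [← pow_mul, mul_comm n, pow_mul, neg_one_sq, one_pow]
  have hpow : (r ^ (2 * n)) = t ^ (2 * n) := by
    have e1 : ((r ^ 4)⁻¹ ^ n) * (r ^ 4) ^ n = 1 := by
      rw [← mul_pow, inv_mul_cancel₀ (pow_ne_zero 4 hr0), one_pow]
    have e2 : ((t ^ 4)⁻¹ ^ n) * (t ^ 4) ^ n = 1 := by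
      rw [← mul_pow, inv_mul_cancel₀ (pow_ne_zero 4 ht0), one_pow]
    have e3 : y ^ n * z ^ n = 1 := by rw [← mul_pow, hyz, one_pow]
    have e4 : y ^ n * ((t ^ 4) ^ n) ^ 2 = (r ^ 2) ^ n * (t ^ 2) ^ n * (r ^ 4) ^ n := by
      rw [← pow_mul, mul_comm n, pow_mul, ← mul_pow, ← mul_pow, ← mul_pow, ← pow_mul, hy1]
      congr 1
      linear_combination -r ^ 4 * (r * t + 2) * ht
    have e5 : ((r ^ 4)⁻¹ ^ n) ^ 2 = z ^ n * ((t ^ 4)⁻¹ ^ n) ^ 2 := by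
      apply mul_right_cancel₀ (pow_ne_zero 2 hY)
      linear_combination hy - ((r ^ 4)⁻¹ ^ n) ^ 2 * Y ^ 2 * hneg
    have e6 : ((r ^ 4) ^ n) ^ 2 = y ^ n * ((t ^ 4) ^ n) ^ 2 := by
      have e1' := congrArg (· ^ 2) e1
      have e2' := congrArg (· ^ 2) e2
      simp only [one_pow, mul_pow _ _ 2] at e1' e2'
      linear_combination y ^ n * ((t ^ 4) ^ n) ^ 2 * e1' -
        y ^ n * ((t ^ 4) ^ n) ^ 2 * ((r ^ 4) ^ n) ^ 2 * e5 -
        y ^ n * z ^ n * ((r ^ 4) ^ n) ^ 2 * e2' - ((r ^ 4) ^ n) ^ 2 * e3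
    rw [e4, pow_two] at e6
    replace e6 := mul_right_cancel₀ (pow_ne_zero n (pow_ne_zero 4 hr0)) e6
    rw [show (r ^ 4) ^ n = (r ^ 2) ^ n * (r ^ 2) ^ n by rw [← mul_pow, ← pow_add]] at e6
    rw [pow_mul, pow_mul]
    exact mul_left_cancel₀ (pow_ne_zero n (pow_ne_zero 2 hr0)) e6
  have e5 : t = t ^ (2 * n) * r := by
    rw [← hpow, ← pow_succ, ← hpn, hrp]
  have e6 : r = t ^ (2 * n) * t := by
    rw [← pow_succ, ← hpn, htp]
  have e7 : (t - r) * (t + r) = 0 := by linear_combination t * e5 - r * e6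
  rcases mul_eq_zero.1 e7 with h | h
  · exact hne (sub_eq_zero.1 h)
  · exact one_ne_zero (α := K) (by linear_combination h - hr)

/-- The value `-64` when `t (1 - t) = 2` has roots exchanged by Frobenius. -/
theorem padicDeriv_three_neg_sixtyFour_eq_zero_of_pow_eq (hpn : p = 2 * n + 1) (hp : 3 < p)
    (h63 : toZMod (1 - 4 * 16 : ℤ_[p]) ≠ 0) {t : AlgebraicClosure (ZMod p)}
    (ht : t * (1 - t) = 2) (htp : t ^ p = 1 - t) (hne : t ≠ 1 - t) :
    padicDeriv n 3 (-64 : ℤ_[p]) = 0 := by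
  have := charP_of_injective_algebraMap
    (algebraMap (ZMod p) (AlgebraicClosure (ZMod p))).injective p
  have h2 : (2 : AlgebraicClosure (ZMod p)) ≠ 0 := by
    exact_mod_cast natCast_ne_zero_of_lt (K := AlgebraicClosure (ZMod p)) (p := p)
      (by omega) (by omega : 2 < p)
  have h2' : (2 : ZMod p) ≠ 0 := by
    exact_mod_cast natCast_ne_zero_of_lt (K := ZMod p) (p := p) (by omega) (by omega : 2 < p)
  have h := choosePowSum_two_sq hpn (t ^ 4)
  rw [choosePowSum_pow_four_eq_zero_of_pow_eq hpn h2 ht htp hne] at h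
  have e : t ^ 4 * (1 - t ^ 4) = 16 := by
    linear_combination (((t * (1 - t)) ^ 2 + 4) * (t * (1 - t) + 2) - 2 * (t * (1 - t)) * t ^ 4) *
      ht
  rw [e] at h
  have h' := padicDeriv_three_eq_zero_of_choosePowSum_eq_zero hpn (by omega) (u := 16)
    (by rw [map_ofNat, show (16 : ZMod p) = 2 ^ 4 by norm_num]; exact pow_ne_zero 4 h2') h63 ?_
  · convert h' using 2
    norm_num
  · apply (algebraMap (ZMod p) (AlgebraicClosure (ZMod p))).injective
    rw [map_choosePowSum, map_zero, map_mul, map_neg, map_ofNat, map_ofNat, map_ofNat, ← h]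
    simp

/-- The value `-64` when `t (1 - t) = 2` has `p`-adic roots `t` and `r`. -/
theorem padicDeriv_three_neg_sixtyFour_eq_zero_of_mul_eq (hpn : p = 2 * n + 1) (hp : 3 < p)
    (h7 : toZMod (1 - 4 * 2 : ℤ_[p]) ≠ 0) {t r : ℤ_[p]} (hr : t + r = 1) (ht : t * r = 2) :
    padicDeriv n 3 (-64 : ℤ_[p]) = 0 := by
  have hp2 : 2 < p := by omega
  have h2 : toZMod (2 : ℤ_[p]) ≠ 0 := by
    rw [map_ofNat]
    exact_mod_cast natCast_ne_zero_of_lt (K := ZMod p) (p := p) (by omega) hp2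
  have htr := map_mul toZMod t r
  rw [ht] at htr
  have ht0 : toZMod t ≠ 0 := left_ne_zero_of_mul (htr ▸ h2)
  have hr0 : toZMod r ≠ 0 := right_ne_zero_of_mul (htr ▸ h2)
  obtain ⟨v, hv⟩ := isUnit_iff_toZMod_ne_zero.2 ht0
  obtain ⟨w, hw⟩ := isUnit_iff_toZMod_ne_zero.2 hr0
  have hA : t * (v⁻¹ : ℤ_[p]ˣ) = 1 := hv ▸ v.mul_inv
  have hB : r * (w⁻¹ : ℤ_[p]ˣ) = 1 := hw ▸ w.mul_inv
  generalize ((v⁻¹ : ℤ_[p]ˣ) : ℤ_[p]) = A at hA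
  generalize ((w⁻¹ : ℤ_[p]ˣ) : ℤ_[p]) = B at hB
  have hsq : t ^ 2 + r ^ 2 = -3 := by linear_combination (t + r + 1) * hr - 2 * ht
  have hsum : t ^ 4 + r ^ 4 = 1 := by
    linear_combination (t ^ 2 + r ^ 2 - 3) * hsq - 2 * (t * r + 2) * ht
  -- the product of the two sums at `s`, and its behaviour under `s ↦ 1 - s` and `s ↦ s⁻¹`
  let T (s : ℤ_[p]) : ZMod p := choosePowSum n 2 (toZMod s) * (toZMod s * padicDeriv n 2 s)
  have hneg : ((-1 : ZMod p) ^ n) ^ 2 = 1 := by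
    rw [← pow_mul, mul_comm n, pow_mul, neg_one_sq, one_pow]
  have hT1 (s : ℤ_[p]) (hs : toZMod s ≠ 0) (hs' : toZMod (1 - s) ≠ 0) : T (1 - s) = -T s := by
    have h1 := one_sub_mul_padicDeriv_one_sub hpn hp2 hs hs'
    have h3 := choosePowSum_one_sub hpn (toZMod s)
    simp only [T, map_sub, map_one, h1, h3]
    linear_combination -(choosePowSum n 2 (toZMod s) * (toZMod s * padicDeriv n 2 s)) * hneg
  have hT2 (a b : ℤ_[p]) (hab : a * b = 1) : T (b ^ 4) = -(toZMod b ^ 8 * T (a ^ 4)) := by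
    have hab4 : a ^ 4 * b ^ 4 = 1 := by rw [← mul_pow, hab, one_pow]
    have hab' : toZMod a * toZMod b = 1 := by rw [← map_mul, hab, map_one]
    have hab4' : toZMod a ^ 4 * toZMod b ^ 4 = 1 := by rw [← mul_pow, hab', one_pow]
    have hbn : toZMod b ^ (2 * n) = 1 := by
      have := ZMod.pow_card_sub_one_eq_one (right_ne_zero_of_mul_eq_one hab')
      rwa [show p - 1 = 2 * n by omega] at this
    have hbn4 : (toZMod b ^ 4) ^ n * (toZMod b ^ 4) ^ n = 1 := by
      rw [← pow_add, ← pow_mul, show 4 * (n + n) = 2 * n * 4 by ring, pow_mul, hbn, one_pow]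
    have h1 := padicDeriv_of_mul_eq_one (n := n) 2 hab4
    have h3 := choosePowSum_inv n 2 (left_ne_zero_of_mul_eq_one hab4')
    rw [← eq_inv_of_mul_eq_one_right hab4'] at h3
    simp only [T, map_pow, h1, h3]
    linear_combination -(toZMod b ^ 4 * choosePowSum n 2 (toZMod a ^ 4) * padicDeriv n 2 (a ^ 4)) *
      hbn4 + toZMod b ^ 4 * choosePowSum n 2 (toZMod a ^ 4) * padicDeriv n 2 (a ^ 4) * hab4'
  have hsub (a b c : ℤ_[p]) (hab : a * b = 1) (hac : a ^ 4 + c ^ 4 = 1) :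
      1 - b ^ 4 = -(c ^ 4 * b ^ 4) := by
    have hab4 : a ^ 4 * b ^ 4 = 1 := by rw [← mul_pow, hab, one_pow]
    linear_combination b ^ 4 * hac - hab4
  have hkey (a b c : ℤ_[p]) (hab : a * b = 1) (hac : a ^ 4 + c ^ 4 = 1) (hc : toZMod c ≠ 0)
      (hac2 : a * c = 2) :
      toZMod c ^ 6 * toZMod a ^ 6 * padicDeriv n 3 (c ^ 6 * b ^ 6) =
      4 * (toZMod a ^ 4 - 2) * T (a ^ 4) := by
    have hab' : toZMod a * toZMod b = 1 := by rw [← map_mul, hab, map_one]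
    have hb := right_ne_zero_of_mul_eq_one hab'
    have hs := hsub a b c hab hac
    have h := mul_padicDeriv_three hpn hp2 (s := b ^ 4) (by rw [map_pow]; exact pow_ne_zero 4 hb)
      (by rw [hs, map_neg, map_mul, map_pow, map_pow]
          exact neg_ne_zero.2 (mul_ne_zero (pow_ne_zero 4 hc) (pow_ne_zero 4 hb)))
    have e : -(4 * (b ^ 4 * (1 - b ^ 4))) = c ^ 6 * b ^ 6 := by
      rw [hs]
      have : a ^ 2 * b ^ 2 = 1 := by rw [← mul_pow, hab, one_pow]
      have h4 : a ^ 2 * c ^ 2 = 4 := by rw [← mul_pow, hac2]; norm_num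
      linear_combination -(c ^ 4 * b ^ 8) * h4 + c ^ 6 * b ^ 6 * this
    rw [e] at h
    have e' := congrArg toZMod e
    change _ = (1 - 2 * toZMod (b ^ 4)) * T (b ^ 4) at h
    rw [hT2 a b hab] at h
    simp only [map_neg, map_mul, map_sub, map_pow, map_one, map_ofNat] at h e'
    have h8 : toZMod a ^ 8 * toZMod b ^ 8 = 1 := by rw [← mul_pow, hab', one_pow]
    have h4 : toZMod a ^ 4 * toZMod b ^ 4 = 1 := by rw [← mul_pow, hab', one_pow]
    have h6 : toZMod a ^ 6 * toZMod b ^ 6 = 1 := by rw [← mul_pow, hab', one_pow]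
    linear_combination -(toZMod c ^ 6 * toZMod a ^ 6 * padicDeriv n 3 (c ^ 6 * b ^ 6)) * h6 -
      toZMod a ^ 12 * padicDeriv n 3 (c ^ 6 * b ^ 6) * e' - 4 * toZMod a ^ 12 * h +
      4 * T (a ^ 4) * ((toZMod a ^ 4 - 2 * (toZMod a ^ 4 * toZMod b ^ 4)) * h8 - 2 * h4)
  have hX : T (r ^ 4) = 0 := by
    have k1 := hkey t A r hA hsum hr0 ht
    have k2 := hkey r B t hB (by rw [add_comm, hsum]) ht0 (by rw [mul_comm, ht])
    have hy : r ^ 6 * A ^ 6 * (t ^ 6 * B ^ 6) = 1 := by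
      have := congrArg (· ^ 6) (congrArg₂ (· * ·) hA hB)
      simp only [one_mul, one_pow] at this
      rw [← this]
      ring
    have hB' : toZMod B ≠ 0 := by
      have := congrArg toZMod hB
      rw [map_mul, map_one] at this
      exact right_ne_zero_of_mul_eq_one this
    have hpow : toZMod (t ^ 6 * B ^ 6) ^ n = 1 := by
      have := ZMod.pow_card_sub_one_eq_one
        (mul_ne_zero (pow_ne_zero 3 ht0) (pow_ne_zero 3 hB'))
      rw [show p - 1 = 2 * n by omega, pow_mul] at this
      rw [← this, map_mul, map_pow, map_pow]
      congr 1
      ring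
    have hT : T (t ^ 4) = -T (r ^ 4) := by
      have e : 1 - r ^ 4 = t ^ 4 := by linear_combination -hsum
      have := hT1 (r ^ 4) (by rw [map_pow]; exact pow_ne_zero 4 hr0)
        (by rw [e, map_pow]; exact pow_ne_zero 4 ht0)
      rwa [e] at this
    rw [padicDeriv_of_mul_eq_one 3 hy, hpow, one_mul] at k2
    rw [hT] at k1
    have hd := congrArg toZMod (show (r ^ 4 - t ^ 4) * (r - t) = -3 * (1 - 4 * 2) by
      linear_combination (r - t) ^ 2 * (hr * (t ^ 2 + r ^ 2) + hsq) -
        3 * ((t + r + 1) * hr - 4 * ht))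
    rw [map_mul, map_mul _ (-3), map_neg] at hd
    simp only [map_sub _ (_ ^ _), map_pow] at hd
    have h4 : (4 : ZMod p) ≠ 0 := by
      rw [map_ofNat] at h2
      rw [show (4 : ZMod p) = 2 * 2 by norm_num]
      exact mul_ne_zero h2 h2
    have h84 := mul_ne_zero h4 (mul_ne_zero (neg_ne_zero.2 (toZMod_three_ne_zero hp)) h7)
    apply (mul_eq_zero.1 (_ : _ * T (r ^ 4) = 0)).resolve_left h84
    rw [← hd]
    linear_combination -toZMod (r - t) * (k1 + k2)
  have h := padicDeriv_three_eq_zero hpn hp2 (s := r ^ 4)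
    (by rw [map_pow]; exact pow_ne_zero 4 hr0)
    (by rw [show 1 - r ^ 4 = t ^ 4 by linear_combination -hsum, map_pow]
        exact pow_ne_zero 4 ht0) hX
  convert h using 2
  linear_combination (4 * (t * r) ^ 3 + 8 * (t * r) ^ 2 + 16 * (t * r) + 32) * ht - 4 * r ^ 4 * hsum

end SpecialValues

section Main

variable {p : ℕ} [Fact p.Prime] {n : ℕ}

open PadicInt (toZMod)

theorem padicInt_coe_ofNat (m : ℕ) [m.AtLeastTwo] :
    ((OfNat.ofNat m : ℤ_[p]) : ℚ_[p]) = OfNat.ofNat m :=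
  map_ofNat PadicInt.Coe.ringHom m

theorem padicDeriv_three_neg_sixtyFour_eq_zero (hpn : p = 2 * n + 1) (hp : 3 < p)
    (h : toZMod (64 : ℤ_[p]) ≠ 1) : padicDeriv n 3 (-64 : ℤ_[p]) = 0 := by
  have h63 : toZMod (1 - 4 * 16 : ℤ_[p]) ≠ 0 := by
    rw [show (1 - 4 * 16 : ℤ_[p]) = 1 - 64 by norm_num, map_sub, map_one]
    exact sub_ne_zero.2 h.symm
  have h7 : toZMod (1 - 4 * 2 : ℤ_[p]) ≠ 0 := by
    refine left_ne_zero_of_mul (b := toZMod 9) ?_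
    rw [← map_mul]
    convert h63 using 2
    norm_num
  rcases exists_mul_one_sub_eq_or hpn (by omega) h7 with ⟨t, ht⟩ | ⟨t, ht, htp, hne⟩
  · exact padicDeriv_three_neg_sixtyFour_eq_zero_of_mul_eq hpn hp h7 (add_sub_cancel t 1) ht
  · rw [map_ofNat, map_ofNat] at ht
    exact padicDeriv_three_neg_sixtyFour_eq_zero_of_pow_eq hpn hp h63 ht htp hne

theorem padicDeriv_three_neg_eq_zero_of_mul_eq_one {x y : ℤ_[p]} (h : x * y = 1)
    (hx : padicDeriv n 3 (-x) = 0) : padicDeriv n 3 (-y) = 0 := by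
  rw [padicDeriv_of_mul_eq_one 3 (by linear_combination h : -x * -y = 1), hx, mul_zero, neg_zero]

/-- The congruence in terms of `padicDeriv`, for the complex multiplication values. -/
theorem padicDeriv_three_neg_eq_zero (hpn : p = 2 * n + 1) (hp : 3 < p) {lamQ : ℚ}
    (hCM : lamQ ∈ ({-8, -1/8, 4, 1/4, 64, 1/64, -1} : Set ℚ))
    {lam : ℤ_[p]} (hlift : (lam : ℚ_[p]) = (lamQ : ℚ_[p])) (h1 : toZMod lam ≠ 1) :
    padicDeriv n 3 (-lam) = 0 := by
  have inv (c : ℤ_[p]) (hc : (lam : ℚ_[p]) * (c : ℚ_[p]) = 1) : c * lam = 1 := by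
    rw [mul_comm]
    exact PadicInt.ext (by rw [PadicInt.coe_mul, hc, PadicInt.coe_one])
  simp only [Set.mem_insert_iff, Set.mem_singleton_iff] at hCM
  rcases hCM with rfl | rfl | rfl | rfl | rfl | rfl | rfl
  · have : lam = -8 := by
      apply PadicInt.ext
      rw [hlift]
      push_cast
      rfl
    rw [this, neg_neg]
    exact padicDeriv_three_eight_eq_zero hpn (by omega)
  · refine padicDeriv_three_neg_eq_zero_of_mul_eq_one (inv (-8) ?_) ?_
    · rw [hlift, PadicInt.coe_neg, padicInt_coe_ofNat]
      push_cast
      norm_num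
    · rw [neg_neg]
      exact padicDeriv_three_eight_eq_zero hpn (by omega)
  · have : lam = 4 := by
      apply PadicInt.ext
      rw [hlift]
      push_cast
      rfl
    rw [this]
    exact padicDeriv_three_neg_four_eq_zero hpn hp
  · refine padicDeriv_three_neg_eq_zero_of_mul_eq_one (inv 4 ?_)
      (padicDeriv_three_neg_four_eq_zero hpn hp)
    rw [hlift, padicInt_coe_ofNat]
    push_cast
    norm_num
  · have : lam = 64 := by
      apply PadicInt.ext
      rw [hlift]
      push_cast
      rfl
    rw [this] at h1 ⊢
    exact padicDeriv_three_neg_sixtyFour_eq_zero hpn hp h1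
  · have h := inv 64 (by
      rw [hlift, padicInt_coe_ofNat]
      push_cast
      norm_num)
    refine padicDeriv_three_neg_eq_zero_of_mul_eq_one h
      (padicDeriv_three_neg_sixtyFour_eq_zero hpn hp fun h64 => h1 ?_)
    rw [← map_one toZMod, ← h, map_mul, h64, one_mul]
  · have : lam = -1 := by
      apply PadicInt.ext
      rw [hlift]
      push_cast
      rfl
    rw [this, neg_neg]
    exact padicDeriv_three_one_eq_zero (by omega)

theorem exists_coe_eq_harmonicSum {k : ℕ} (hk : k < p) :
    ∃ x : ℤ_[p], (x : ℚ_[p]) = (harmonicSum k : ℚ_[p]) ∧ toZMod x = fieldHarmonic (ZMod p) k := by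
  induction k with
  | zero => exact ⟨0, by simp [harmonicSum], by simp [fieldHarmonic]⟩
  | succ k ih =>
    obtain ⟨x, hx, hx'⟩ := ih (by omega)
    have hu : toZMod ((k + 1 : ℕ) : ℤ_[p]) ≠ 0 := by
      rw [map_natCast]
      exact natCast_ne_zero_of_lt (p := p) (by omega) hk
    obtain ⟨v, hv⟩ := isUnit_iff_toZMod_ne_zero.2 hu
    have hv1 : (v : ℤ_[p]) * (v⁻¹ : ℤ_[p]ˣ) = 1 := v.mul_inv
    rw [hv] at hv1
    refine ⟨x + (v⁻¹ : ℤ_[p]ˣ), ?_, ?_⟩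
    · have h := congrArg (fun z : ℤ_[p] => (z : ℚ_[p])) hv1
      rw [harmonicSum, sum_Icc_succ_top (by omega), ← harmonicSum]
      push_cast at h ⊢
      rw [hx, eq_inv_of_mul_eq_one_right h, one_div]
    · have h := congrArg toZMod hv1
      rw [map_mul, map_natCast, map_one] at h
      rw [map_add, hx', eq_inv_of_mul_eq_one_right h, fieldHarmonic_succ]
      push_cast
      rfl

theorem exists_coe_eq_sum (hpn : p = 2 * n + 1) (hp : 2 < p) {lam : ℤ_[p]}
    (h0 : toZMod lam ≠ 0) : ∃ z : ℤ_[p], toZMod z = padicDeriv n 3 (-lam) ∧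
      (z : ℚ_[p]) = ∑ i ∈ range (n + 1),
        (Nat.choose (2 * i) i : ℚ_[p]) ^ 3 * ((lam : ℚ_[p]) / 64) ^ i *
          ((6 * ((harmonicSum (2 * i) : ℚ_[p]) - (harmonicSum i : ℚ_[p])))
            + (((lam : ℚ_[p]) / 64) ^ (p - 1) - 1) / p) := by
  have h2 : toZMod (2 : ℤ_[p]) ≠ 0 := by
    rw [map_ofNat]
    exact_mod_cast natCast_ne_zero_of_lt (K := ZMod p) (p := p) (by omega) hp
  have h4 : toZMod (2 ^ 2 : ℤ_[p]) ≠ 0 := by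
    rw [map_pow]
    exact pow_ne_zero 2 h2
  have h64 : toZMod (2 ^ 2 * 2 ^ 2 * 2 ^ 2 : ℤ_[p]) ≠ 0 := by
    rw [map_mul, map_mul]
    exact mul_ne_zero (mul_ne_zero h4 h4) h4
  have hfq : fermatQuot (2 ^ 2 * 2 ^ 2 * 2 ^ 2 : ℤ_[p]) = -3 * fieldHarmonic (ZMod p) n := by
    have := fermatQuot_mul h2 h2
    rw [← pow_two] at this
    rw [fermatQuot_mul (by rw [map_mul]; exact mul_ne_zero h4 h4) h4, fermatQuot_mul h4 h4,
      this, fieldHarmonic_eq_neg_two_mul_fermatQuot hpn hp]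
    ring
  rw [show (2 ^ 2 * 2 ^ 2 * 2 ^ 2 : ℤ_[p]) = 64 by norm_num] at h64 hfq
  obtain ⟨v, hv⟩ := isUnit_iff_toZMod_ne_zero.2 h64
  have hv1 : (v : ℤ_[p]) * (v⁻¹ : ℤ_[p]ˣ) = 1 := v.mul_inv
  rw [hv] at hv1
  generalize ((v⁻¹ : ℤ_[p]ˣ) : ℤ_[p]) = w at hv1
  have hw : toZMod 64 * toZMod w = 1 := by rw [← map_mul, hv1, map_one]
  have hy0 : toZMod (lam * w) ≠ 0 := by
    rw [map_mul]
    exact mul_ne_zero h0 (right_ne_zero_of_mul_eq_one hw)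
  have hfy : fermatQuot (lam * w) = fermatQuot lam + 3 * fieldHarmonic (ZMod p) n := by
    rw [fermatQuot_mul h0 (right_ne_zero_of_mul_eq_one hw), fermatQuot_of_mul_eq_one hv1, hfq]
    ring
  have hw' : (w : ℚ_[p]) = 64⁻¹ :=
    eq_inv_of_mul_eq_one_right (by exact_mod_cast congrArg (fun z : ℤ_[p] => (z : ℚ_[p])) hv1)
  obtain ⟨q, hq, hq'⟩ := logRatio_fermatQuot hy0
  have hp0 : (p : ℚ_[p]) ≠ 0 := Nat.cast_ne_zero.2 (Fact.out : p.Prime).ne_zero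
  have hqc : (q : ℚ_[p]) = (((lam : ℚ_[p]) / 64) ^ (p - 1) - 1) / p := by
    rw [eq_div_iff hp0, div_eq_mul_inv, ← hw']
    have := congrArg (fun z : ℤ_[p] => (z : ℚ_[p])) hq'
    push_cast at this
    linear_combination -this
  have hH (k : ℕ) : ∃ x : ℤ_[p], k < p → (x : ℚ_[p]) = (harmonicSum k : ℚ_[p]) ∧
      toZMod x = fieldHarmonic (ZMod p) k := by
    by_cases hk : k < p
    · obtain ⟨x, hx⟩ := exists_coe_eq_harmonicSum hk
      exact ⟨x, fun _ => hx⟩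
    · exact ⟨0, fun h => absurd h hk⟩
  choose H hH using hH
  refine ⟨∑ i ∈ range (n + 1), (Nat.choose (2 * i) i : ℤ_[p]) ^ 3 * (lam * w) ^ i *
    (6 * (H (2 * i) - H i) + q), ?_, ?_⟩
  · rw [map_sum, padicDeriv, choosePowDeriv]
    refine sum_congr rfl fun i hi => ?_
    have hi : i ≤ n := by simpa [Nat.lt_succ_iff] using hi
    have hc := centralBinom_eq_neg_four_pow_mul (K := ZMod p) hpn hi
    rw [Nat.centralBinom] at hc
    have hs := fieldHarmonic_sub (K := ZMod p) hpn hi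
    have e : ((-4 : ZMod p) ^ i) ^ 3 * (toZMod lam * toZMod w) ^ i = (-toZMod lam) ^ i := by
      rw [← pow_mul, mul_comm i, pow_mul, ← mul_pow]
      congr 1
      rw [map_ofNat] at hw
      linear_combination -toZMod lam * hw
    rw [fermatQuot_neg hp h0]
    simp only [map_mul, map_add, map_sub, map_pow, map_natCast, map_neg, map_ofNat]
    rw [(hH (2 * i) (by omega)).2, (hH i (by omega)).2, hq, hfy, hc, ← e, hs]
    push_cast
    ring
  · change PadicInt.Coe.ringHom _ = _
    rw [map_sum]
    refine sum_congr rfl fun i hi => ?_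
    change ((_ : ℤ_[p]) : ℚ_[p]) = _
    have hi : i ≤ n := by simpa [Nat.lt_succ_iff] using hi
    push_cast
    rw [padicInt_coe_ofNat, (hH (2 * i) (by omega)).1, (hH i (by omega)).1, hqc, hw',
      ← div_eq_mul_inv]

end Main

theorem stmt6 (lamQ : ℚ)
    (hCM : lamQ ∈ ({-8, -1/8, 4, 1/4, 64, 1/64, -1} : Set ℚ))
    (p : ℕ) [Fact p.Prime] (hp : 3 < p)
    (lam : ℤ_[p]) (hlift : (lam : ℚ_[p]) = (lamQ : ℚ_[p]))
    (h0 : PadicInt.toZMod lam ≠ 0) (h1 : PadicInt.toZMod lam ≠ 1) :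
    ‖∑ i ∈ range ((p - 1) / 2 + 1),
        (Nat.choose (2 * i) i : ℚ_[p]) ^ 3 * ((lam : ℚ_[p]) / 64) ^ i *
          ((6 * ((harmonicSum (2 * i) : ℚ_[p]) - (harmonicSum i : ℚ_[p])))
            + (((lam : ℚ_[p]) / 64) ^ (p - 1) - 1) / p)‖
      ≤ (p : ℝ) ^ (-1 : ℤ) := by
  have hpn : p = 2 * ((p - 1) / 2) + 1 := by
    obtain ⟨k, hk⟩ := (Fact.out : p.Prime).odd_of_ne_two (by omega)
    omega
  obtain ⟨z, hz, hsum⟩ := exists_coe_eq_sum hpn (by omega) h0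
  rw [padicDeriv_three_neg_eq_zero hpn hp hCM hlift h1, toZMod_eq_zero_iff_dvd] at hz
  rw [← hsum, ← PadicInt.norm_def]
  have h := PadicInt.norm_le_pow_iff_mem_span_pow z 1
  rw [pow_one, Ideal.mem_span_singleton] at h
  exact_mod_cast h.2 hz
end
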